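/- arXiv:0903.4508 — 2 statements merged into one kernel-verified Lean document; each statement's English description precedes it below -/
import Mathlib

section
/- Weak convergence theorem, Case (B): with s = −1, X_t/t converges weakly to the measure ((κ−2)/(κ−1))·δ_0 + (1/(κ−1))·f_κ(x)dx; that is, for every bounded continuous function g : ℝ → ℝ, lim_{t→∞} Σ_{x∈ℤ₊} P(X_t = x)·g(x/t) = ((κ−2)/(κ−1))·g(0) + (1/(κ−1))·∫_0^a g(x)·f_κ(x) dx. -/
open Filter Topology MeasureTheory

noncomputable section

/-- Half-line quantum walk `Ψ_t(x) = (Ψ_t^L(x), Ψ_t^R(x))` with a reflecting wall at the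
origin, coin parameters `a`, `b` and wall sign `s`:
`Ψ_0(0) = (1,0)`, `Ψ_0(x) = (0,0)` for `x ≥ 1`, and
`Ψ_{t+1}^L(x) = a·Ψ_t^L(x+1) − b·Ψ_t^R(x+1)`,
`Ψ_{t+1}^R(x) = b·Ψ_t^L(x−1) + a·Ψ_t^R(x−1)` for `x ≥ 2`,
`Ψ_{t+1}^R(1) = s·Ψ_t^L(0)`, `Ψ_{t+1}^R(0) = 0`. -/
noncomputable def psi (a b s : ℝ) : ℕ → ℕ → ℂ × ℂ
  | 0, x => if x = 0 then (1, 0) else (0, 0)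
  | t + 1, x =>
      ((a : ℂ) * (psi a b s t (x + 1)).1 - (b : ℂ) * (psi a b s t (x + 1)).2,
       if x = 0 then 0
       else if x = 1 then (s : ℂ) * (psi a b s t 0).1
       else (b : ℂ) * (psi a b s t (x - 1)).1 + (a : ℂ) * (psi a b s t (x - 1)).2)

/-- Position distribution `P(X_t = x) = |Ψ_t^L(x)|² + |Ψ_t^R(x)|²`. -/
noncomputable def prob (a b s : ℝ) (t x : ℕ) : ℝ :=
  ‖(psi a b s t x).1‖ ^ 2 + ‖(psi a b s t x).2‖ ^ 2

open Real ComplexConjugate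

/-!
With `r = √(κ - 1)`, the coin is the rotation that takes `(1, -r)` to `(r, -1)`. For `s = -1` the
one-step operator then has the eigenvalues `1` and `-1`, with eigenvectors proportional to
`(± r⁻¹)^x (1, -r)`, and the projection of the initial state to them is a bound state, which is
never far from the wall. The remainder of the initial state may be taken to be of the form
`φ(x) (1, -r)`, as the wall ignores the right amplitude at the origin. Extended by zero to `ℤ` and
run with the wall removed, it keeps its two amplitudes at the origin in the ratio `1 : -r`, so that
the coin at the origin acts on it like the wall: on the half-line the walk is the sum of the bound
state and this image walk.

The image walk is solved by Fourier transform. The correlation of its transforms at the momenta `k`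
and `k + ξ / t` oscillates with the phase `t (θ(k + ξ / t) - θ(k)) → ξ θ'(k)`, where `θ` is the
dispersion relation, so after rescaling its position distribution, of total mass `2 / r²`, converges
to the law of the group velocity `θ'(k)` weighted by `θ'(k)²`. The part on the positive half-line is
the absolutely continuous part of the limit, and the mass that is left over stays at the origin.
-/

lemma integral_eq_zero_of_odd {E : Type*} [NormedAddCommGroup E] [NormedSpace ℝ E] {f : ℝ → E}
    (hf : f.Odd) (c : ℝ) : ∫ x in -c..c, f x = 0 := by
  have : IsAddTorsionFree E := .of_isTorsionFree ℝ E
  have hneg := intervalIntegral.integral_comp_neg (a := -c) (b := c) f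
  simp only [hf.eq, neg_neg, intervalIntegral.integral_neg] at hneg
  exact self_eq_neg.1 hneg.symm

lemma integral_count_eq_tsum {ι E : Type*} [MeasurableSpace ι] [MeasurableSingletonClass ι]
    [Countable ι] [NormedAddCommGroup E] [NormedSpace ℝ E] [CompleteSpace E] {f : ι → E}
    (hf : Summable fun i => ‖f i‖) : ∫ i, f i ∂Measure.count = ∑' i, f i := by
  rw [integral_countable (integrable_count_iff.2 hf)]
  simp [Measure.real]

section FourierSeries

/-- `F` is the sum of the absolutely convergent Fourier series `∑ c n e^{ikn}`. -/
structure HasFourierSum (c : ℤ → ℂ) (F : ℝ → ℂ) : Prop where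
  summable_norm : Summable fun n => ‖c n‖
  hasSum (k : ℝ) : HasSum (fun n => c n * Circle.exp (k * n)) (F k)

namespace HasFourierSum

variable {c d : ℤ → ℂ} {F G : ℝ → ℂ}

lemma continuous (h : HasFourierSum c F) : Continuous F := by
  have hF : F = fun k => ∑' n, c n * Circle.exp (k * n) :=
    funext fun k => (h.hasSum k).tsum_eq.symm
  rw [hF]
  exact continuous_tsum (fun n => by fun_prop) h.summable_norm fun n k => by
    rw [norm_mul, Circle.norm_coe, mul_one]

lemma add (hc : HasFourierSum c F) (hd : HasFourierSum d G) :
    HasFourierSum (fun n => c n + d n) fun k => F k + G k where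
  summable_norm :=
    (hc.summable_norm.add hd.summable_norm).of_nonneg_of_le (fun _ => norm_nonneg _)
      fun _ => norm_add_le _ _
  hasSum k := by simpa only [add_mul] using (hc.hasSum k).add (hd.hasSum k)

lemma const_mul (w : ℂ) (h : HasFourierSum c F) :
    HasFourierSum (fun n => w * c n) fun k => w * F k where
  summable_norm := by simpa only [norm_mul] using h.summable_norm.mul_left ‖w‖
  hasSum k := by simpa only [mul_assoc] using (h.hasSum k).mul_left w

lemma shift (m : ℤ) (h : HasFourierSum c F) :
    HasFourierSum (fun n => c (n + m)) fun k => Circle.exp (-(k * m)) * F k where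
  summable_norm := (Equiv.addRight m).summable_iff.2 h.summable_norm
  hasSum k := by
    refine (((Equiv.addRight m).hasSum_iff.2 (h.hasSum k)).mul_left
      (Circle.exp (-(k * m)) : ℂ)).congr_fun fun n => ?_
    have hexp : Circle.exp (k * n) = Circle.exp (-(k * m)) * Circle.exp (k * (n + m : ℤ)) := by
      rw [← Circle.exp_add]
      push_cast
      ring_nf
    rw [hexp, Circle.coe_mul, Function.comp_apply, Equiv.coe_addRight]
    ring

lemma modulate (ξ : ℝ) (h : HasFourierSum c F) :
    HasFourierSum (fun n => c n * Circle.exp (ξ * n)) fun k => F (k + ξ) where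
  summable_norm := by simpa only [norm_mul, Circle.norm_coe, mul_one] using h.summable_norm
  hasSum k := by
    convert h.hasSum (k + ξ) using 2 with n
    rw [add_mul, Circle.exp_add, Circle.coe_mul]
    ring

lemma of_nat {c : ℕ → ℂ} (hc : Summable fun n => ‖c n‖)
    (hF : ∀ k : ℝ, HasSum (fun n : ℕ => c n * Circle.exp (k * n)) (F k)) :
    HasFourierSum (Function.extend (Nat.cast : ℕ → ℤ) c 0) F where
  summable_norm := by
    refine (Nat.cast_injective.summable_iff fun n hn => ?_).1 (hc.congr fun n => ?_)
    · rw [Function.extend_apply' _ _ _ hn, Pi.zero_apply, norm_zero]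
    · rw [Function.comp_apply, Nat.cast_injective.extend_apply]
  hasSum k := by
    refine (Nat.cast_injective.hasSum_iff fun n hn => ?_).1 ((hF k).congr_fun fun n => ?_)
    · rw [Function.extend_apply' _ _ _ hn, Pi.zero_apply, zero_mul]
    · rw [Function.comp_apply, Nat.cast_injective.extend_apply, Int.cast_natCast]

lemma hasSum_integral (h : HasFourierSum c F) (hG : Continuous G) :
    HasSum (fun n => c n * ∫ k in -π..π, G k * Circle.exp (k * n)) (∫ k in -π..π, G k * F k) := by
  simp only [← intervalIntegral.integral_const_mul]
  refine intervalIntegral.hasSum_integral_of_dominated_convergence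
    (fun n k => ‖c n‖ * ‖G k‖) (fun n => by fun_prop) (fun n => .of_forall fun k _ => ?_)
    (.of_forall fun k _ => h.summable_norm.mul_right _) ?_ (.of_forall fun k _ => ?_)
  · rw [norm_mul, norm_mul, Circle.norm_coe, mul_one]
  · simp only [tsum_mul_right]
    exact (continuous_const.mul hG.norm).intervalIntegrable _ _
  · simpa only [mul_left_comm] using (h.hasSum k).mul_left (G k)

lemma integral_mul_exp (h : HasFourierSum c F) (m : ℤ) :
    ∫ k in -π..π, F k * Circle.exp (-(k * m)) = 2 * π * c m := by
  have hsum := h.hasSum_integral (G := fun k => Circle.exp (-(k * m))) (by fun_prop)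
  simp only [mul_comm (F _)]
  refine hsum.unique ?_
  convert hasSum_single m fun n hn => ?_ using 1
  · simp_rw [← Circle.coe_mul, ← Circle.exp_add, neg_add_cancel, Circle.exp_zero, Circle.coe_one]
    rw [intervalIntegral.integral_const]
    simp only [sub_neg_eq_add, Complex.real_smul, Complex.ofReal_add, mul_one]
    ring
  · have hnm : ((n - m : ℤ) : ℂ) * Complex.I ≠ 0 := by simp [sub_ne_zero, hn]
    have hexp (k : ℝ) : (Circle.exp (-(k * m)) : ℂ) * Circle.exp (k * n) =
        Complex.exp ((n - m : ℤ) * Complex.I * k) := by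
      rw [← Circle.coe_mul, ← Circle.exp_add, Circle.coe_exp]
      push_cast
      ring_nf
    have hperiod : Complex.exp ((n - m : ℤ) * Complex.I * π) =
        Complex.exp ((n - m : ℤ) * Complex.I * (-π : ℝ)) :=
      Complex.exp_eq_exp_iff_exists_int.2 ⟨n - m, by push_cast; ring⟩
    simp_rw [hexp]
    rw [integral_exp_mul_complex hnm, hperiod, sub_self, zero_div, mul_zero]

lemma hasSum_conj_mul (hc : HasFourierSum c F) (hd : HasFourierSum d G) :
    HasSum (fun n => conj (c n) * d n) ((2 * π : ℂ)⁻¹ * ∫ k in -π..π, conj (F k) * G k) := by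
  have hconj (n : ℤ) :
      ∫ k in -π..π, conj (F k) * Circle.exp (k * n) = 2 * π * conj (c n) := by
    have hcoef := congrArg conj (hc.integral_mul_exp n)
    simp only [intervalIntegral, map_sub, ← integral_conj, map_mul, Circle.exp_neg,
      Circle.coe_inv_eq_conj, Complex.conj_conj, Complex.conj_ofReal, map_ofNat] at hcoef
    exact hcoef
  refine ((hd.hasSum_integral (Complex.continuous_conj.comp hc.continuous)).mul_left
    (2 * π : ℂ)⁻¹).congr_fun fun n => ?_
  simp only [Function.comp_apply, hconj]
  field_simp

end HasFourierSum

end FourierSeries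

section WeakConvergence

variable {α : Type*} [MeasurableSpace α] {μ : Measure α} {w X : α → ℝ}

/-- The distribution of `X` under the measure with density `w` with respect to `μ`. -/
def weightedLaw (μ : Measure α) (w X : α → ℝ) : Measure ℝ :=
  (μ.withDensity fun x => ENNReal.ofReal (w x)).map X

lemma integral_weightedLaw {E : Type*} [NormedAddCommGroup E] [NormedSpace ℝ E]
    (hw : AEMeasurable w μ) (hw0 : ∀ x, 0 ≤ w x) (hX : Measurable X) {φ : ℝ → E}
    (hφ : Continuous φ) : ∫ y, φ y ∂weightedLaw μ w X = ∫ x, w x • φ (X x) ∂μ := by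
  rw [weightedLaw, integral_map hX.aemeasurable hφ.aestronglyMeasurable,
    integral_withDensity_eq_integral_toReal_smul₀ hw.ennreal_ofReal
      (.of_forall fun _ => ENNReal.ofReal_lt_top)]
  simp only [ENNReal.toReal_ofReal (hw0 _)]

lemma isProbabilityMeasure_weightedLaw (hw : Integrable w μ) (hw0 : ∀ x, 0 ≤ w x)
    (hw1 : ∫ x, w x ∂μ = 1) (hX : Measurable X) :
    IsProbabilityMeasure (weightedLaw μ w X) := by
  have : IsProbabilityMeasure (μ.withDensity fun x => ENNReal.ofReal (w x)) := ⟨by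
    rw [withDensity_apply _ .univ, Measure.restrict_univ,
      ← ofReal_integral_eq_lintegral_ofReal hw (.of_forall hw0), hw1, ENNReal.ofReal_one]⟩
  exact Measure.isProbabilityMeasure_map hX.aemeasurable

lemma tendsto_integral_of_tendsto_charFun {β : Type*} [MeasurableSpace β] {ν : Measure β}
    {w X : ℕ → α → ℝ} {u Y : β → ℝ} (hw : ∀ t, Integrable (w t) μ) (hw0 : ∀ t x, 0 ≤ w t x)
    (hw1 : ∀ t, ∫ x, w t x ∂μ = 1) (hX : ∀ t, Measurable (X t)) (hu : Integrable u ν)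
    (hu0 : ∀ y, 0 ≤ u y) (hu1 : ∫ y, u y ∂ν = 1) (hY : Measurable Y)
    (hchar : ∀ ξ : ℝ, Tendsto (fun t => ∫ x, w t x • (Circle.exp (ξ * X t x) : ℂ) ∂μ) atTop
      (𝓝 (∫ y, u y • (Circle.exp (ξ * Y y) : ℂ) ∂ν)))
    {g : ℝ → ℝ} (hg : Continuous g) {M : ℝ} (hgM : ∀ x, ‖g x‖ ≤ M) :
    Tendsto (fun t => ∫ x, w t x * g (X t x) ∂μ) atTop (𝓝 (∫ y, u y * g (Y y) ∂ν)) := by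
  let P (t : ℕ) : ProbabilityMeasure ℝ :=
    ⟨weightedLaw μ (w t) (X t), isProbabilityMeasure_weightedLaw (hw t) (hw0 t) (hw1 t) (hX t)⟩
  let P' : ProbabilityMeasure ℝ :=
    ⟨weightedLaw ν u Y, isProbabilityMeasure_weightedLaw hu hu0 hu1 hY⟩
  have hP : Tendsto P atTop (𝓝 P') := by
    refine ProbabilityMeasure.tendsto_iff_tendsto_charFun.2 fun ξ => ?_
    have hexp : Continuous fun y => (Circle.exp (ξ * y) : ℂ) := by fun_prop
    simp only [charFun_apply_real, ← Complex.ofReal_mul, ← Circle.coe_exp, P, P',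
      ProbabilityMeasure.coe_mk, integral_weightedLaw (hw _).aemeasurable (hw0 _) (hX _) hexp,
      integral_weightedLaw hu.aemeasurable hu0 hY hexp]
    exact hchar ξ
  have hint := ProbabilityMeasure.tendsto_iff_forall_integral_tendsto.1 hP
    (.ofNormedAddCommGroup g hg M hgM)
  simpa only [P, P', ProbabilityMeasure.coe_mk, BoundedContinuousFunction.coe_ofNormedAddCommGroup,
    integral_weightedLaw (hw _).aemeasurable (hw0 _) (hX _) hg,
    integral_weightedLaw hu.aemeasurable hu0 hY hg, smul_eq_mul] using hint

end WeakConvergence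

section LineWalk

variable {a b : ℝ} {φ : ℤ → ℂ × ℂ}

/-- The quantum walk on `ℤ` with coin `[[a, -b], [b, a]]` at every site and initial state `φ`. -/
def lineWalk (a b : ℝ) (φ : ℤ → ℂ × ℂ) : ℕ → ℤ → ℂ × ℂ
  | 0, x => φ x
  | t + 1, x =>
      (a * (lineWalk a b φ t (x + 1)).1 - b * (lineWalk a b φ t (x + 1)).2,
       b * (lineWalk a b φ t (x - 1)).1 + a * (lineWalk a b φ t (x - 1)).2)

lemma HasFourierSum.lineWalk_succ {t : ℕ} {A B : ℝ → ℂ}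
    (hA : HasFourierSum (fun x => (lineWalk a b φ t x).1) A)
    (hB : HasFourierSum (fun x => (lineWalk a b φ t x).2) B) :
    HasFourierSum (fun x => (lineWalk a b φ (t + 1) x).1)
        (fun k => Circle.exp (-k) * (a * A k - b * B k)) ∧
      HasFourierSum (fun x => (lineWalk a b φ (t + 1) x).2)
        (fun k => Circle.exp k * (b * A k + a * B k)) := by
  constructor
  · simpa [lineWalk, sub_eq_add_neg] using ((hA.const_mul a).add (hB.const_mul (-b))).shift 1
  · simpa [lineWalk, sub_eq_add_neg] using ((hA.const_mul b).add (hB.const_mul a)).shift (-1)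

/-- The dispersion relation of the walk on `ℤ`: the evolution in momentum space has the
eigenvalues `e^{± i dispersion a k}`. -/
def dispersion (a k : ℝ) : ℝ := arccos (a * cos k)

/-- The group velocity, that is, the derivative of `dispersion a`. -/
def groupVelocity (a k : ℝ) : ℝ := a * sin k / sin (dispersion a k)

lemma dispersion_neg (a k : ℝ) : dispersion a (-k) = dispersion a k := by
  rw [dispersion, cos_neg, dispersion]

lemma groupVelocity_neg (a k : ℝ) : groupVelocity a (-k) = -groupVelocity a k := by
  rw [groupVelocity, dispersion_neg, sin_neg, mul_neg, neg_div, groupVelocity]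

lemma groupVelocity_pi_sub (a k : ℝ) : groupVelocity a (π - k) = groupVelocity a k := by
  simp only [groupVelocity, dispersion, sin_pi_sub, cos_pi_sub, mul_neg, arccos_neg]

lemma groupVelocity_periodic (a : ℝ) : Function.Periodic (groupVelocity a) (2 * π) := fun k => by
  simp only [groupVelocity, dispersion, sin_add_two_pi, cos_add_two_pi]

lemma continuous_dispersion (a : ℝ) : Continuous (dispersion a) := by
  unfold dispersion
  fun_prop

lemma abs_mul_cos_lt_one (ha : |a| < 1) (k : ℝ) : |a * cos k| < 1 := by
  rw [abs_mul]
  exact (mul_le_of_le_one_right (abs_nonneg a) (abs_cos_le_one k)).trans_lt ha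

lemma cos_dispersion (ha : |a| < 1) (k : ℝ) : cos (dispersion a k) = a * cos k :=
  have h := abs_lt.1 (abs_mul_cos_lt_one ha k)
  cos_arccos h.1.le h.2.le

lemma sin_dispersion_pos (ha : |a| < 1) (k : ℝ) : 0 < sin (dispersion a k) := by
  rw [dispersion, sin_arccos]
  exact sqrt_pos.2 (sub_pos.2 ((sq_lt_one_iff_abs_lt_one _).2 (abs_mul_cos_lt_one ha k)))

lemma sin_dispersion_sq (ha : |a| < 1) (k : ℝ) :
    sin (dispersion a k) ^ 2 = 1 - (a * cos k) ^ 2 := by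
  rw [sin_sq, cos_dispersion ha]

lemma hasDerivAt_dispersion (ha : |a| < 1) (k : ℝ) :
    HasDerivAt (dispersion a) (groupVelocity a k) k := by
  have h := abs_lt.1 (abs_mul_cos_lt_one ha k)
  refine ((hasDerivAt_arccos h.1.ne' h.2.ne).comp k
    ((hasDerivAt_cos k).const_mul a)).congr_deriv ?_
  rw [groupVelocity, dispersion, sin_arccos]
  ring

lemma continuous_groupVelocity (ha : |a| < 1) : Continuous (groupVelocity a) :=
  (continuous_const.mul continuous_sin).div (continuous_sin.comp (continuous_dispersion a))
    fun k => (sin_dispersion_pos ha k).ne'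

lemma one_sub_groupVelocity_sq (ha : |a| < 1) (k : ℝ) :
    1 - groupVelocity a k ^ 2 = (1 - a ^ 2) / sin (dispersion a k) ^ 2 := by
  have hs := (sin_dispersion_pos ha k).ne'
  rw [groupVelocity]
  field_simp
  linear_combination sin_dispersion_sq ha k - a ^ 2 * sin_sq_add_cos_sq k

lemma sq_sub_groupVelocity_sq (ha : |a| < 1) (k : ℝ) :
    a ^ 2 - groupVelocity a k ^ 2 = (1 - a ^ 2) * (a * cos k / sin (dispersion a k)) ^ 2 := by
  have hs := (sin_dispersion_pos ha k).ne'
  rw [groupVelocity]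
  field_simp
  linear_combination a ^ 2 * sin_dispersion_sq ha k - a ^ 2 * sin_sq_add_cos_sq k

lemma abs_groupVelocity_le_one (ha : |a| < 1) (k : ℝ) : |groupVelocity a k| ≤ 1 := by
  have h : 0 ≤ 1 - groupVelocity a k ^ 2 := by
    rw [one_sub_groupVelocity_sq ha]
    have := (sq_lt_one_iff_abs_lt_one a).2 ha
    exact div_nonneg (by linarith) (sq_nonneg _)
  exact (sq_le_one_iff_abs_le_one _).1 (by linarith)

lemma tendsto_mul_dispersion_sub (ha : |a| < 1) (ξ k : ℝ) :
    Tendsto (fun t : ℕ => t * (dispersion a (k + ξ / t) - dispersion a k)) atTop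
      (𝓝 (ξ * groupVelocity a k)) := by
  have hderiv : HasDerivAt (fun η => dispersion a (k + ξ * η)) (ξ * groupVelocity a k) 0 := by
    have hlin : HasDerivAt (fun η => k + ξ * η) ξ 0 := by
      simpa using ((hasDerivAt_id (0 : ℝ)).const_mul ξ).const_add k
    have hdisp : HasDerivAt (dispersion a) (groupVelocity a k) (k + ξ * 0) := by
      simpa using hasDerivAt_dispersion ha k
    rw [mul_comm]
    exact HasDerivAt.comp (h₂ := dispersion a) 0 hdisp hlin
  have hinv : Tendsto (fun t : ℕ => (t : ℝ)⁻¹) atTop (𝓝[≠] 0) :=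
    (tendsto_inv_atTop_nhdsGT_zero.comp tendsto_natCast_atTop_atTop).mono_right
      (nhdsWithin_mono _ fun _ => ne_of_gt)
  simpa [div_eq_mul_inv, Function.comp_def] using
    (hasDerivAt_iff_tendsto_slope_zero.1 hderiv).comp hinv

end LineWalk

section KonnoDensity

variable {a : ℝ}

lemma hasDerivAt_groupVelocity (ha : |a| < 1) (k : ℝ) :
    HasDerivAt (groupVelocity a) (a * cos k * (1 - a ^ 2) / sin (dispersion a k) ^ 3) k := by
  have hs := (sin_dispersion_pos ha k).ne'
  refine (((hasDerivAt_sin k).const_mul a).div (hasDerivAt_dispersion ha k).sin hs).congr_deriv ?_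
  rw [cos_dispersion ha, groupVelocity]
  field_simp
  linear_combination a * cos k * sin_dispersion_sq ha k - a ^ 3 * cos k * sin_sq_add_cos_sq k

lemma strictMonoOn_groupVelocity (ha0 : 0 < a) (ha1 : a < 1) :
    StrictMonoOn (groupVelocity a) (Set.Icc (-(π / 2)) (π / 2)) := by
  have ha : |a| < 1 := by rwa [abs_of_pos ha0]
  refine strictMonoOn_of_deriv_pos (convex_Icc _ _) (continuous_groupVelocity ha).continuousOn
    fun k hk => ?_
  rw [interior_Icc] at hk
  rw [(hasDerivAt_groupVelocity ha k).deriv]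
  have hcos := cos_pos_of_mem_Ioo hk
  have hsq : 0 < 1 - a ^ 2 := by nlinarith
  exact div_pos (by positivity) (pow_pos (sin_dispersion_pos ha k) 3)

lemma image_groupVelocity (ha0 : 0 < a) (ha1 : a < 1) :
    groupVelocity a '' Set.Ioo (-(π / 2)) (π / 2) = Set.Ioo (-a) a := by
  have ha : |a| < 1 := by rwa [abs_of_pos ha0]
  have hpi : -(π / 2) ≤ π / 2 := by linarith [pi_pos]
  have hright : groupVelocity a (π / 2) = a := by simp [groupVelocity, dispersion]
  have hleft : groupVelocity a (-(π / 2)) = -a := by rw [groupVelocity_neg, hright]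
  rw [(continuous_groupVelocity ha).continuousOn.image_Ioo_of_strictMonoOn hpi
    (strictMonoOn_groupVelocity ha0 ha1), hleft, hright]

/-- Konno's density, the law of `groupVelocity a k` for uniformly distributed momentum `k`. -/
def konnoDensity (a x : ℝ) : ℝ := √(1 - a ^ 2) / (π * (1 - x ^ 2) * √(a ^ 2 - x ^ 2))

lemma deriv_groupVelocity_mul_konnoDensity (ha0 : 0 < a) (ha1 : a < 1) {k : ℝ} (hk : 0 < cos k) :
    a * cos k * (1 - a ^ 2) / sin (dispersion a k) ^ 3 * konnoDensity a (groupVelocity a k) =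
      π⁻¹ := by
  have ha : |a| < 1 := by rwa [abs_of_pos ha0]
  have hs := sin_dispersion_pos ha k
  have hsq : 0 < 1 - a ^ 2 := by nlinarith
  have hsqrt := (sqrt_pos.2 hsq).ne'
  rw [konnoDensity, one_sub_groupVelocity_sq ha, sq_sub_groupVelocity_sq ha, sqrt_mul hsq.le,
    sqrt_sq (by positivity)]
  field_simp

lemma integral_mul_konnoDensity (ha0 : 0 < a) (ha1 : a < 1) (ψ : ℝ → ℝ) :
    ∫ x in Set.Ioo (-a) a, ψ x * konnoDensity a x =
      π⁻¹ * ∫ k in -(π / 2)..π / 2, ψ (groupVelocity a k) := by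
  have ha : |a| < 1 := by rwa [abs_of_pos ha0]
  have hsq : 0 < 1 - a ^ 2 := by nlinarith
  rw [← image_groupVelocity ha0 ha1,
    integral_image_eq_integral_abs_deriv_smul measurableSet_Ioo
      (fun k _ => (hasDerivAt_groupVelocity ha k).hasDerivWithinAt)
      ((strictMonoOn_groupVelocity ha0 ha1).injOn.mono Set.Ioo_subset_Icc_self),
    intervalIntegral.integral_of_le (by linarith [pi_pos]), integral_Ioc_eq_integral_Ioo,
    ← integral_const_mul]
  refine setIntegral_congr_fun measurableSet_Ioo fun k hk => ?_
  have hcos := cos_pos_of_mem_Ioo hk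
  have hderiv : 0 < a * cos k * (1 - a ^ 2) / sin (dispersion a k) ^ 3 :=
    div_pos (by positivity) (pow_pos (sin_dispersion_pos ha k) 3)
  simp only [smul_eq_mul, abs_of_pos hderiv]
  rw [mul_left_comm, deriv_groupVelocity_mul_konnoDensity ha0 ha1 hcos, mul_comm]

lemma integral_comp_groupVelocity (ha0 : 0 < a) (ha1 : a < 1) {ψ : ℝ → ℝ} (hψ : Continuous ψ) :
    ∫ k in -π..π, ψ (groupVelocity a k) =
      2 * π * ∫ x in Set.Ioo (-a) a, ψ x * konnoDensity a x := by
  have ha : |a| < 1 := by rwa [abs_of_pos ha0]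
  have hcont : Continuous fun k => ψ (groupVelocity a k) := hψ.comp (continuous_groupVelocity ha)
  have hperiod : Function.Periodic (fun k => ψ (groupVelocity a k)) (2 * π) :=
    (groupVelocity_periodic a).comp ψ
  have hreflect := intervalIntegral.integral_comp_sub_left (a := -(π / 2)) (b := π / 2)
    (fun k => ψ (groupVelocity a k)) π
  simp only [groupVelocity_pi_sub, sub_half, sub_neg_eq_add] at hreflect
  calc ∫ k in -π..π, ψ (groupVelocity a k)
      = ∫ k in -(π / 2)..π + π / 2, ψ (groupVelocity a k) := by
        convert hperiod.intervalIntegral_add_eq (-π) (-(π / 2)) using 2 <;> ring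
    _ = 2 * ∫ k in -(π / 2)..π / 2, ψ (groupVelocity a k) := by
        rw [← intervalIntegral.integral_add_adjacent_intervals (b := π / 2)
          (hcont.intervalIntegrable _ _) (hcont.intervalIntegrable _ _), ← hreflect, two_mul]
    _ = 2 * π * ∫ x in Set.Ioo (-a) a, ψ x * konnoDensity a x := by
        rw [integral_mul_konnoDensity ha0 ha1]
        field_simp

end KonnoDensity

/-- The coin `[[a, -b], [b, a]]` is the rotation taking `(1, -r)` to `(r, -1)`, where `1 < r`.
For the coin of the theorem `r = √(κ - 1)`. -/
structure IsCoin (a b r : ℝ) : Prop where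
  one_lt : 1 < r
  add_mul_eq : a + b * r = r
  sub_mul_eq : b - a * r = -1

namespace IsCoin

variable {a b r : ℝ}

lemma left_mul_one_add_sq (h : IsCoin a b r) : a * (1 + r ^ 2) = 2 * r := by
  linear_combination h.add_mul_eq - r * h.sub_mul_eq

lemma right_mul_one_add_sq (h : IsCoin a b r) : b * (1 + r ^ 2) = r ^ 2 - 1 := by
  linear_combination r * h.add_mul_eq + h.sub_mul_eq

lemma sq_add_sq (h : IsCoin a b r) : a ^ 2 + b ^ 2 = 1 := by
  have hr : 1 + r ^ 2 ≠ 0 := by positivity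
  refine mul_right_cancel₀ hr ?_
  linear_combination (a + b * r + r) * h.add_mul_eq + (b - a * r - 1) * h.sub_mul_eq

lemma pos (h : IsCoin a b r) : 0 < r := zero_lt_one.trans h.one_lt

lemma left_pos (h : IsCoin a b r) : 0 < a := by
  have hr := h.pos
  refine pos_of_mul_pos_left (b := 1 + r ^ 2) ?_ (by positivity)
  rw [h.left_mul_one_add_sq]
  positivity

lemma right_pos (h : IsCoin a b r) : 0 < b := by
  have hr := h.one_lt
  refine pos_of_mul_pos_left (b := 1 + r ^ 2) ?_ (by positivity)
  rw [h.right_mul_one_add_sq]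
  nlinarith

lemma left_lt_one (h : IsCoin a b r) : a < 1 := by
  have hb := h.right_pos
  nlinarith [h.sq_add_sq]

lemma abs_left_lt_one (h : IsCoin a b r) : |a| < 1 := by
  rw [abs_of_pos h.left_pos]
  exact h.left_lt_one

end IsCoin

section BoundState

variable {r : ℝ}

/-- The left amplitude of the part of the half-line walk that stays at the wall; the right
amplitude is `-r` times it. It is a sum of eigenvectors for the eigenvalues `1` and `-1`. -/
def boundState (r : ℝ) (t x : ℕ) : ℂ :=
  (1 - (r : ℂ)⁻¹ ^ 2) / 2 * ((r : ℂ)⁻¹ ^ x + (-1) ^ t * (-(r : ℂ)⁻¹) ^ x)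

lemma boundState_succ_left (hr : r ≠ 0) (t x : ℕ) :
    boundState r (t + 1) x = r * boundState r t (x + 1) := by
  have hrc : (r : ℂ) ≠ 0 := mod_cast hr
  simp only [boundState, pow_succ]
  linear_combination -((1 - (r : ℂ)⁻¹ ^ 2) / 2 * ((r : ℂ)⁻¹ ^ x - (-1) ^ t * (-(r : ℂ)⁻¹) ^ x)) *
    mul_inv_cancel₀ hrc

lemma boundState_succ_right (hr : r ≠ 0) (t x : ℕ) :
    r * boundState r (t + 1) (x + 1) = boundState r t x := by
  have hrc : (r : ℂ) ≠ 0 := mod_cast hr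
  simp only [boundState, pow_succ]
  linear_combination ((1 - (r : ℂ)⁻¹ ^ 2) / 2 * ((r : ℂ)⁻¹ ^ x + (-1) ^ t * (-(r : ℂ)⁻¹) ^ x)) *
    mul_inv_cancel₀ hrc

lemma norm_boundState_le (hr : 1 ≤ r) (t x : ℕ) : ‖boundState r t x‖ ≤ r⁻¹ ^ x := by
  have hu : 0 ≤ 1 - r⁻¹ ^ 2 := by
    have := pow_le_one₀ (n := 2) (by positivity) (inv_le_one_of_one_le₀ hr)
    linarith
  have hcoef : ‖(1 - (r : ℂ)⁻¹ ^ 2) / 2‖ ≤ 1 / 2 := by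
    rw [show (1 - (r : ℂ)⁻¹ ^ 2) / 2 = ((1 - r⁻¹ ^ 2) / 2 : ℝ) by push_cast; rfl,
      Complex.norm_of_nonneg (by positivity)]
    have : 0 ≤ r⁻¹ ^ 2 := by positivity
    linarith
  have hpow : ‖(r : ℂ)⁻¹ ^ x + (-1) ^ t * (-(r : ℂ)⁻¹) ^ x‖ ≤ r⁻¹ ^ x + r⁻¹ ^ x := by
    refine (norm_add_le _ _).trans_eq ?_
    simp [abs_of_nonneg (zero_le_one.trans hr)]
  calc ‖boundState r t x‖ ≤ 1 / 2 * (r⁻¹ ^ x + r⁻¹ ^ x) := by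
        rw [boundState, norm_mul]
        gcongr
    _ = r⁻¹ ^ x := by ring

end BoundState

section ImageWalk

variable {a b r : ℝ}

/-- The left amplitude of the initial state of the image walk on `ℤ`: what remains of the unit
mass at the wall once the bound state is removed, extended by zero to the negative half-line. -/
def imageAmplitude (r : ℝ) : ℤ → ℂ :=
  Function.extend (Nat.cast : ℕ → ℤ) (fun n => (if n = 0 then 1 else 0) - boundState r 0 n) 0

lemma ofReal_sq_sub_sq_ne_zero (hr : 1 < r) {z : ℂ} (hz : ‖z‖ = 1) : (r : ℂ) ^ 2 - z ^ 2 ≠ 0 := by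
  refine sub_ne_zero.2 fun h => (one_lt_pow₀ hr two_ne_zero).ne' ?_
  have hnorm := congrArg norm h
  rwa [norm_pow, norm_pow, hz, one_pow, Complex.norm_of_nonneg (zero_le_one.trans hr.le)] at hnorm

lemma hasSum_boundState (hr : 1 < r) {z : ℂ} (hz : ‖z‖ = 1) :
    HasSum (fun n => boundState r 0 n * z ^ n) ((r ^ 2 - 1) / (r ^ 2 - z ^ 2)) := by
  have hr0 : 0 < r := zero_lt_one.trans hr
  have hrc : (r : ℂ) ≠ 0 := mod_cast hr0.ne'
  have hne := ofReal_sq_sub_sq_ne_zero hr hz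
  have hnorm : ‖(r : ℂ)⁻¹ * z‖ < 1 := by
    simpa [hz, abs_of_pos hr0] using inv_lt_one_of_one_lt₀ hr
  have hgeom := ((hasSum_geometric_of_norm_lt_one hnorm).add (hasSum_geometric_of_norm_lt_one
    (ξ := -(r : ℂ)⁻¹ * z) (by rwa [neg_mul, norm_neg]))).mul_left ((1 - (r : ℂ)⁻¹ ^ 2) / 2)
  have hvalue : ((r : ℂ) ^ 2 - 1) / (r ^ 2 - z ^ 2) =
      (1 - (r : ℂ)⁻¹ ^ 2) / 2 * ((1 - (r : ℂ)⁻¹ * z)⁻¹ + (1 - -(r : ℂ)⁻¹ * z)⁻¹) := by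
    rw [sq_sub_sq] at hne
    have hadd := left_ne_zero_of_mul hne
    have hsub := right_ne_zero_of_mul hne
    rw [show 1 - (r : ℂ)⁻¹ * z = (r - z) / r by field_simp,
      show 1 - -(r : ℂ)⁻¹ * z = (r + z) / r by field_simp; ring, sq_sub_sq (r : ℂ) z]
    field_simp
    ring
  rw [hvalue]
  refine hgeom.congr_fun fun n => ?_
  rw [boundState, mul_pow, mul_pow]
  ring

lemma hasFourierSum_imageAmplitude (hr : 1 < r) :
    HasFourierSum (imageAmplitude r)
      fun k => (1 - (Circle.exp k : ℂ) ^ 2) / (r ^ 2 - (Circle.exp k : ℂ) ^ 2) := by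
  refine .of_nat ?_ fun k => ?_
  · refine Summable.of_nonneg_of_le (fun _ => norm_nonneg _) (fun n => norm_sub_le _ _)
      (.add (summable_of_ne_finset_zero (s := {0}) fun n hn => ?_) <|
        (summable_geometric_of_lt_one (inv_nonneg.2 (zero_lt_one.trans hr).le)
          (inv_lt_one_of_one_lt₀ hr)).of_nonneg_of_le
          (fun _ => norm_nonneg _) (norm_boundState_le hr.le 0))
    rw [if_neg (by simpa using hn), norm_zero]
  · have hdelta : HasSum (fun n : ℕ => (if n = 0 then 1 else 0) * (Circle.exp k : ℂ) ^ n) 1 := by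
      refine (hasSum_ite_eq 0 (1 : ℂ)).congr_fun fun n => ?_
      split_ifs with hn
      · rw [hn, pow_zero, mul_one]
      · rw [zero_mul]
    have hz : ‖(Circle.exp k : ℂ)‖ = 1 := Circle.norm_coe _
    have hvalue : (1 - (Circle.exp k : ℂ) ^ 2) / (r ^ 2 - (Circle.exp k : ℂ) ^ 2) =
        1 - (r ^ 2 - 1) / (r ^ 2 - (Circle.exp k : ℂ) ^ 2) := by
      rw [one_sub_div (ofReal_sq_sub_sq_ne_zero hr hz)]
      ring
    rw [hvalue]
    refine (hdelta.sub (hasSum_boundState hr hz)).congr_fun fun n => ?_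
    rw [mul_comm k, Circle.exp_natCast_mul, Circle.coe_pow, sub_mul]

/-- The initial state of the image walk. -/
def imageState (r : ℝ) (x : ℤ) : ℂ × ℂ := (imageAmplitude r x, -r * imageAmplitude r x)

/-- The phase by which the Fourier transform of `imageState r` differs from `groupVelocity a`. -/
def imagePhase (a r k : ℝ) : ℂ := (r * (a * cos k) - Circle.exp k) / sin (dispersion a k)

/-- The Fourier transform of the left amplitude of the image walk at time `t`. -/
def leftTransform (a r : ℝ) (t : ℕ) (k : ℝ) : ℂ :=
  -(Complex.I / r) * groupVelocity a k *
    (imagePhase a r (-k) * cos (t * dispersion a k) + r * sin (t * dispersion a k))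

/-- The Fourier transform of the right amplitude of the image walk at time `t`. -/
def rightTransform (a r : ℝ) (t : ℕ) (k : ℝ) : ℂ :=
  -(Complex.I / r) * groupVelocity a k *
    (-r * imagePhase a r (-k) * cos (t * dispersion a k) + sin (t * dispersion a k))

lemma conj_imagePhase (a r k : ℝ) : conj (imagePhase a r k) = imagePhase a r (-k) := by
  simp only [imagePhase, dispersion_neg, cos_neg, Circle.exp_neg, Circle.coe_inv_eq_conj,
    map_div₀, map_sub, map_mul, Complex.conj_ofReal]

lemma circle_exp_mul_exp_neg (k : ℝ) : (Circle.exp k : ℂ) * Circle.exp (-k) = 1 := by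
  rw [← Circle.coe_mul, ← Circle.exp_add, add_neg_cancel, Circle.exp_zero, Circle.coe_one]

lemma circle_exp_add_exp_neg (k : ℝ) : (Circle.exp k : ℂ) + Circle.exp (-k) = 2 * cos k := by
  rw [Circle.coe_exp, Circle.coe_exp, Complex.ofReal_neg, Complex.ofReal_cos, Complex.two_cos]

lemma circle_exp_sub_exp_neg (k : ℝ) :
    (Circle.exp k : ℂ) - Circle.exp (-k) = 2 * Complex.I * sin k := by
  rw [Circle.coe_exp, Circle.coe_exp, Complex.ofReal_neg, Complex.exp_mul_I, Complex.exp_mul_I,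
    Complex.cos_neg, Complex.sin_neg, Complex.ofReal_sin]
  ring

lemma sin_mul_imagePhase (r : ℝ) (ha : |a| < 1) (k : ℝ) :
    sin (dispersion a k) * imagePhase a r k = r * (a * cos k) - Circle.exp k :=
  mul_div_cancel₀ _ (mod_cast (sin_dispersion_pos ha k).ne')

namespace IsCoin

lemma one_add_sq_mul_cos (h : IsCoin a b r) (k : ℝ) :
    (1 + r ^ 2 : ℂ) * (a * cos k) = r * (Circle.exp k + Circle.exp (-k)) := by
  have ha : (a : ℂ) * (1 + r ^ 2) = 2 * r := mod_cast h.left_mul_one_add_sq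
  linear_combination cos k * ha - r * circle_exp_add_exp_neg k

lemma imagePhase_mul_imagePhase_neg (h : IsCoin a b r) (k : ℝ) :
    imagePhase a r k * imagePhase a r (-k) = 1 := by
  have hs : (sin (dispersion a k) : ℂ) ≠ 0 := mod_cast (sin_dispersion_pos h.abs_left_lt_one k).ne'
  have hsq : (sin (dispersion a k) : ℂ) ^ 2 = 1 - (a * cos k) ^ 2 :=
    mod_cast sin_dispersion_sq h.abs_left_lt_one k
  rw [imagePhase, imagePhase, dispersion_neg, cos_neg, div_mul_div_comm,
    div_eq_one_iff_eq (mul_ne_zero hs hs)]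
  linear_combination circle_exp_mul_exp_neg k + a * cos k * h.one_add_sq_mul_cos k - hsq

lemma one_add_sq_mul_groupVelocity (h : IsCoin a b r) (k : ℝ) :
    (1 + r ^ 2 : ℂ) * (Complex.I * groupVelocity a k) =
      r * (imagePhase a r (-k) - imagePhase a r k) := by
  have hs : (sin (dispersion a k) : ℂ) ≠ 0 := mod_cast (sin_dispersion_pos h.abs_left_lt_one k).ne'
  have ha : (a : ℂ) * (1 + r ^ 2) = 2 * r := mod_cast h.left_mul_one_add_sq
  rw [groupVelocity, imagePhase, imagePhase, dispersion_neg, cos_neg, Complex.ofReal_div,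
    Complex.ofReal_mul]
  field_simp
  linear_combination Complex.I * sin k * ha - r * circle_exp_sub_exp_neg k

lemma imagePhase_neg_sq_mul (h : IsCoin a b r) (k : ℝ) :
    imagePhase a r (-k) ^ 2 * (r ^ 2 - (Circle.exp k : ℂ) ^ 2) =
      r ^ 2 * (Circle.exp k : ℂ) ^ 2 - 1 := by
  have hneg := sin_mul_imagePhase r h.abs_left_lt_one (-k)
  rw [dispersion_neg, cos_neg] at hneg
  have hs : (1 + r ^ 2 : ℂ) * sin (dispersion a k) =
      imagePhase a r (-k) * (r ^ 2 * Circle.exp (-k) - Circle.exp k) := by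
    linear_combination (1 + r ^ 2 : ℂ) * (imagePhase a r (-k) *
      sin_mul_imagePhase r h.abs_left_lt_one k -
        sin (dispersion a k) * h.imagePhase_mul_imagePhase_neg k) +
      imagePhase a r (-k) * r * h.one_add_sq_mul_cos k
  linear_combination -imagePhase a r (-k) * Circle.exp k * hs +
    Circle.exp k * ((1 + r ^ 2) * hneg + r * h.one_add_sq_mul_cos k) -
    (imagePhase a r (-k) ^ 2 * r ^ 2 + 1) * circle_exp_mul_exp_neg k

lemma leftTransform_zero (h : IsCoin a b r) (k : ℝ) : leftTransform a r 0 k =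
    (1 - (Circle.exp k : ℂ) ^ 2) / (r ^ 2 - (Circle.exp k : ℂ) ^ 2) := by
  have hr : (r : ℂ) ≠ 0 := mod_cast h.pos.ne'
  have hr2 : (1 + r ^ 2 : ℂ) ≠ 0 := mod_cast (by positivity : (1 + r ^ 2 : ℝ) ≠ 0)
  have hphase : leftTransform a r 0 k = (1 - imagePhase a r (-k) ^ 2) / (1 + r ^ 2) := by
    rw [leftTransform, Nat.cast_zero, zero_mul, cos_zero, sin_zero, Complex.ofReal_one,
      Complex.ofReal_zero]
    field_simp
    linear_combination -imagePhase a r (-k) * h.one_add_sq_mul_groupVelocity k +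
      r * h.imagePhase_mul_imagePhase_neg k
  rw [hphase, div_eq_div_iff hr2 (ofReal_sq_sub_sq_ne_zero h.one_lt (Circle.norm_coe _))]
  linear_combination -h.imagePhase_neg_sq_mul k

lemma leftTransform_succ (h : IsCoin a b r) (t : ℕ) (k : ℝ) : leftTransform a r (t + 1) k =
    Circle.exp (-k) * (a * leftTransform a r t k - b * rightTransform a r t k) := by
  have hneg := sin_mul_imagePhase r h.abs_left_lt_one (-k)
  rw [dispersion_neg, cos_neg] at hneg
  have hadd : (a + b * r : ℂ) = r := mod_cast h.add_mul_eq
  have hsub : (b - a * r : ℂ) = -1 := mod_cast h.sub_mul_eq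
  have hexp : (Circle.exp (-k) : ℂ) * (r * imagePhase a r (-k)) =
      imagePhase a r (-k) * (a * cos k) + r * sin (dispersion a k) := by
    linear_combination -imagePhase a r (-k) * (h.one_add_sq_mul_cos k +
      r * sin_mul_imagePhase r h.abs_left_lt_one k) +
        r * sin (dispersion a k) * h.imagePhase_mul_imagePhase_neg k
  simp only [leftTransform, rightTransform, Nat.cast_succ, add_one_mul, cos_add, sin_add,
    cos_dispersion h.abs_left_lt_one, Complex.ofReal_sub, Complex.ofReal_add, Complex.ofReal_mul]
  linear_combination -(Complex.I / r) * groupVelocity a k * (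
    cos (t * dispersion a k) * (-hexp - Circle.exp (-k) * imagePhase a r (-k) * hadd) -
    sin (t * dispersion a k) * (hneg - Circle.exp (-k) * hsub))

lemma rightTransform_succ (h : IsCoin a b r) (t : ℕ) (k : ℝ) : rightTransform a r (t + 1) k =
    Circle.exp k * (b * leftTransform a r t k + a * rightTransform a r t k) := by
  have hneg := sin_mul_imagePhase r h.abs_left_lt_one (-k)
  rw [dispersion_neg, cos_neg] at hneg
  have hadd : (a + b * r : ℂ) = r := mod_cast h.add_mul_eq
  have hsub : (b - a * r : ℂ) = -1 := mod_cast h.sub_mul_eq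
  have hexp : (Circle.exp k : ℂ) * imagePhase a r (-k) =
      r * imagePhase a r (-k) * (a * cos k) - sin (dispersion a k) := by
    linear_combination imagePhase a r (-k) * sin_mul_imagePhase r h.abs_left_lt_one k -
      sin (dispersion a k) * h.imagePhase_mul_imagePhase_neg k
  simp only [leftTransform, rightTransform, Nat.cast_succ, add_one_mul, cos_add, sin_add,
    cos_dispersion h.abs_left_lt_one, Complex.ofReal_sub, Complex.ofReal_add, Complex.ofReal_mul]
  linear_combination -(Complex.I / r) * groupVelocity a k * (
    cos (t * dispersion a k) * (hexp - Circle.exp k * imagePhase a r (-k) * hsub) +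
    sin (t * dispersion a k) * (r * hneg + h.one_add_sq_mul_cos k - Circle.exp k * hadd))

lemma hasFourierSum_image (h : IsCoin a b r) (t : ℕ) :
    HasFourierSum (fun x => (lineWalk a b (imageState r) t x).1) (leftTransform a r t) ∧
      HasFourierSum (fun x => (lineWalk a b (imageState r) t x).2) (rightTransform a r t) := by
  induction t with
  | zero =>
    have hleft : HasFourierSum (imageAmplitude r) (leftTransform a r 0) := by
      simpa only [← h.leftTransform_zero] using hasFourierSum_imageAmplitude h.one_lt
    have hright : rightTransform a r 0 = fun k => -r * leftTransform a r 0 k := by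
      funext k
      simp only [rightTransform, leftTransform, Nat.cast_zero, zero_mul, cos_zero, sin_zero,
        Complex.ofReal_one, Complex.ofReal_zero, mul_one, mul_zero, add_zero]
      ring
    exact ⟨hleft, hright ▸ hleft.const_mul (-r)⟩
  | succ t ih =>
    have hsucc := HasFourierSum.lineWalk_succ ih.1 ih.2
    simpa only [← h.leftTransform_succ, ← h.rightTransform_succ] using hsucc

lemma lineWalk_imageState_zero (h : IsCoin a b r) (t : ℕ) :
    (lineWalk a b (imageState r) t 0).2 = -r * (lineWalk a b (imageState r) t 0).1 := by
  obtain ⟨hL, hR⟩ := h.hasFourierSum_image t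
  have hcoef := ((hL.const_mul r).add hR).integral_mul_exp 0
  simp only [Int.cast_zero, mul_zero, neg_zero, Circle.exp_zero, Circle.coe_one, mul_one] at hcoef
  have hodd : Function.Odd fun k => r * leftTransform a r t k + rightTransform a r t k := by
    intro k
    simp only [leftTransform, rightTransform, groupVelocity_neg, dispersion_neg, Complex.ofReal_neg]
    ring
  rw [integral_eq_zero_of_odd hodd] at hcoef
  have hpi : (2 * π : ℂ) ≠ 0 := mod_cast two_pi_pos.ne'
  linear_combination (mul_eq_zero_iff_left hpi).1 hcoef.symm

lemma integral_groupVelocity_sq (h : IsCoin a b r) :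
    ∫ k in -π..π, groupVelocity a k ^ 2 = 4 * π / (1 + r ^ 2) := by
  have hr : (r : ℂ) ≠ 0 := mod_cast h.pos.ne'
  have hr2 : (1 + r ^ 2 : ℂ) ≠ 0 := mod_cast (by positivity : (1 + r ^ 2 : ℝ) ≠ 0)
  have hleft := (h.hasFourierSum_image 0).1
  have hcoef : ∫ k in -π..π, leftTransform a r 0 k = 2 * π * (r : ℂ)⁻¹ ^ 2 := by
    have hzero : (lineWalk a b (imageState r) 0 0).1 = (r : ℂ)⁻¹ ^ 2 := by
      have hext : imageAmplitude r ((0 : ℕ) : ℤ) = 1 - boundState r 0 0 := by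
        rw [imageAmplitude, Nat.cast_injective.extend_apply, if_pos rfl]
      simp only [lineWalk, imageState, ← Nat.cast_zero (R := ℤ), hext, boundState, pow_zero]
      ring
    simpa [hzero] using hleft.integral_mul_exp 0
  have hodd : Function.Odd fun k => leftTransform a r 0 k -
      (1 + r ^ 2) / (2 * r ^ 2) * ((groupVelocity a k ^ 2 : ℝ) : ℂ) := by
    intro k
    simp only [leftTransform, groupVelocity_neg, neg_neg, Nat.cast_zero, zero_mul, cos_zero,
      sin_zero, Complex.ofReal_one, Complex.ofReal_zero, Complex.ofReal_neg, Complex.ofReal_pow]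
    field_simp
    linear_combination 2 * Complex.I * groupVelocity a k * h.one_add_sq_mul_groupVelocity k -
      2 * (1 + r ^ 2) * groupVelocity a k ^ 2 * Complex.I_sq
  have hsq : Continuous fun k => ((groupVelocity a k ^ 2 : ℝ) : ℂ) :=
    Complex.continuous_ofReal.comp ((continuous_groupVelocity h.abs_left_lt_one).pow 2)
  have hdiff := integral_eq_zero_of_odd hodd π
  rw [intervalIntegral.integral_sub (hleft.continuous.intervalIntegrable _ _)
    (Continuous.intervalIntegrable (by fun_prop) _ _), intervalIntegral.integral_const_mul,
    intervalIntegral.integral_ofReal, hcoef] at hdiff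
  suffices ((∫ k in -π..π, groupVelocity a k ^ 2 : ℝ) : ℂ) = (4 * π / (1 + r ^ 2) : ℝ) from
    mod_cast this
  push_cast
  field_simp at hdiff ⊢
  linear_combination -hdiff

end IsCoin

/-- The position distribution of the image walk, of total mass `2 / r ^ 2`. -/
def imageWeight (a b r : ℝ) (t : ℕ) (x : ℤ) : ℝ :=
  ‖(lineWalk a b (imageState r) t x).1‖ ^ 2 + ‖(lineWalk a b (imageState r) t x).2‖ ^ 2

/-- The inner product of the Fourier transforms of the image walk at the momenta `k` and `l`. -/
def correlation (a r : ℝ) (t : ℕ) (k l : ℝ) : ℂ :=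
  (1 + r ^ 2) / r ^ 2 * (groupVelocity a k * groupVelocity a l) *
    (imagePhase a r k * imagePhase a r (-l) *
      (cos (t * dispersion a k) * cos (t * dispersion a l)) +
      sin (t * dispersion a k) * sin (t * dispersion a l))

lemma imageWeight_nonneg (a b r : ℝ) (t : ℕ) (x : ℤ) : 0 ≤ imageWeight a b r t x := by
  rw [imageWeight]
  positivity

lemma continuous_imagePhase (r : ℝ) (ha : |a| < 1) : Continuous (imagePhase a r) := by
  unfold imagePhase
  refine .div (by fun_prop) ?_ fun k => mod_cast (sin_dispersion_pos ha k).ne'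
  exact Complex.continuous_ofReal.comp (continuous_sin.comp (continuous_dispersion a))

namespace IsCoin

lemma conj_transform_mul_transform (h : IsCoin a b r) (t : ℕ) (k l : ℝ) :
    conj (leftTransform a r t k) * leftTransform a r t l +
        conj (rightTransform a r t k) * rightTransform a r t l = correlation a r t k l := by
  have hr : (r : ℂ) ≠ 0 := mod_cast h.pos.ne'
  simp only [leftTransform, rightTransform, correlation, map_mul, map_add, map_neg, map_div₀,
    Complex.conj_I, Complex.conj_ofReal, conj_imagePhase, neg_neg]
  field_simp
  linear_combination (-(groupVelocity a k * groupVelocity a l) * (1 + r ^ 2) *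
    (imagePhase a r k * imagePhase a r (-l) * (cos (t * dispersion a k) * cos (t * dispersion a l))
      + sin (t * dispersion a k) * sin (t * dispersion a l)) : ℂ) * Complex.I_sq

lemma hasSum_imageWeight_mul_exp (h : IsCoin a b r) (t : ℕ) (ξ : ℝ) :
    HasSum (fun x : ℤ => (imageWeight a b r t x : ℂ) * Circle.exp (ξ * x))
      ((2 * π : ℂ)⁻¹ * ∫ k in -π..π, correlation a r t k (k + ξ)) := by
  obtain ⟨hL, hR⟩ := h.hasFourierSum_image t
  have hLc := hL.continuous
  have hRc := hR.continuous
  have hsum := (hL.hasSum_conj_mul (hL.modulate ξ)).add (hR.hasSum_conj_mul (hR.modulate ξ))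
  rw [← mul_add, ← intervalIntegral.integral_add
    (Continuous.intervalIntegrable (by fun_prop) _ _)
    (Continuous.intervalIntegrable (by fun_prop) _ _)] at hsum
  simp only [h.conj_transform_mul_transform] at hsum
  refine hsum.congr_fun fun x => ?_
  rw [imageWeight, Complex.ofReal_add, Complex.ofReal_pow, Complex.ofReal_pow,
    ← Complex.conj_mul', ← Complex.conj_mul']
  ring

lemma norm_imagePhase (h : IsCoin a b r) (k : ℝ) : ‖imagePhase a r k‖ = 1 := by
  have hnorm := congrArg norm (h.imagePhase_mul_imagePhase_neg k)
  rw [← conj_imagePhase, norm_mul, Complex.norm_conj, norm_one] at hnorm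
  nlinarith [norm_nonneg (imagePhase a r k)]

lemma correlation_self (h : IsCoin a b r) (t : ℕ) (k : ℝ) :
    correlation a r t k k = ((1 + r ^ 2) / r ^ 2 * groupVelocity a k ^ 2 : ℝ) := by
  have htrig : (cos (t * dispersion a k) : ℂ) ^ 2 + (sin (t * dispersion a k) : ℂ) ^ 2 = 1 :=
    mod_cast cos_sq_add_sin_sq _
  rw [correlation, h.imagePhase_mul_imagePhase_neg, Complex.ofReal_mul, Complex.ofReal_pow,
    show (((1 + r ^ 2) / r ^ 2 : ℝ) : ℂ) = (1 + r ^ 2) / r ^ 2 by push_cast; rfl]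
  linear_combination ((1 + r ^ 2) / r ^ 2 * groupVelocity a k ^ 2 : ℂ) * htrig

lemma norm_correlation_le (h : IsCoin a b r) (t : ℕ) (k l : ℝ) :
    ‖correlation a r t k l‖ ≤ 2 * ((1 + r ^ 2) / r ^ 2) := by
  have ha := h.abs_left_lt_one
  have hC : ‖((1 + r ^ 2) / r ^ 2 : ℂ)‖ = (1 + r ^ 2) / r ^ 2 := by
    rw [show ((1 + r ^ 2) / r ^ 2 : ℂ) = ((1 + r ^ 2) / r ^ 2 : ℝ) by push_cast; rfl,
      Complex.norm_of_nonneg (by positivity)]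
  have hv : ‖(groupVelocity a k * groupVelocity a l : ℂ)‖ ≤ 1 := by
    rw [norm_mul, Complex.norm_real, Complex.norm_real]
    exact mul_le_one₀ (abs_groupVelocity_le_one ha k) (norm_nonneg _)
      (abs_groupVelocity_le_one ha l)
  have hosc : ‖imagePhase a r k * imagePhase a r (-l) *
      (cos (t * dispersion a k) * cos (t * dispersion a l)) +
      sin (t * dispersion a k) * sin (t * dispersion a l)‖ ≤ 1 + 1 := by
    refine (norm_add_le _ _).trans (add_le_add ?_ ?_)
    · simp only [norm_mul, h.norm_imagePhase, one_mul, Complex.norm_real, Real.norm_eq_abs]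
      exact mul_le_one₀ (abs_cos_le_one _) (abs_nonneg _) (abs_cos_le_one _)
    · simp only [norm_mul, Complex.norm_real, Real.norm_eq_abs]
      exact mul_le_one₀ (abs_sin_le_one _) (abs_nonneg _) (abs_sin_le_one _)
  rw [correlation, norm_mul, norm_mul, hC]
  calc (1 + r ^ 2) / r ^ 2 * _ * _ ≤ (1 + r ^ 2) / r ^ 2 * 1 * (1 + 1) := by gcongr
    _ = 2 * ((1 + r ^ 2) / r ^ 2) := by ring

lemma tendsto_correlation (h : IsCoin a b r) (ξ k : ℝ) :
    Tendsto (fun t : ℕ => correlation a r t k (k + ξ / t)) atTop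
      (𝓝 ((1 + r ^ 2) / r ^ 2 * groupVelocity a k ^ 2 * cos (ξ * groupVelocity a k))) := by
  have ha := h.abs_left_lt_one
  have hmom : Tendsto (fun t : ℕ => k + ξ / t) atTop (𝓝 k) := by
    simpa using tendsto_const_nhds.add (tendsto_const_div_atTop_nhds_zero_nat ξ)
  have hv : Tendsto (fun t : ℕ => (groupVelocity a (k + ξ / t) : ℂ)) atTop
      (𝓝 (groupVelocity a k)) :=
    (Complex.continuous_ofReal.comp (continuous_groupVelocity ha)).continuousAt.tendsto.comp hmom
  have hphase : Tendsto (fun t : ℕ => (imagePhase a r k * imagePhase a r (-(k + ξ / t)) - 1) *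
      (cos (t * dispersion a k) * cos (t * dispersion a (k + ξ / t)))) atTop (𝓝 0) := by
    refine Tendsto.zero_mul_isBoundedUnder_le ?_ (isBoundedUnder_of ⟨1, fun t => ?_⟩)
    · have hq : Continuous fun l => imagePhase a r k * imagePhase a r (-l) - 1 :=
        ((continuous_imagePhase r ha).comp continuous_neg).const_mul _ |>.sub continuous_const
      simpa [h.imagePhase_mul_imagePhase_neg, Function.comp_def] using (hq.tendsto k).comp hmom
    · simp only [Function.comp_apply, norm_mul, Complex.norm_real, Real.norm_eq_abs]
      exact mul_le_one₀ (abs_cos_le_one _) (abs_nonneg _) (abs_cos_le_one _)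
  have hcos : Tendsto (fun t : ℕ => (cos (t * (dispersion a (k + ξ / t) - dispersion a k)) : ℂ))
      atTop (𝓝 (cos (ξ * groupVelocity a k))) :=
    (Complex.continuous_ofReal.comp continuous_cos).continuousAt.tendsto.comp
      (tendsto_mul_dispersion_sub ha ξ k)
  convert ((tendsto_const_nhds (x := (groupVelocity a k : ℂ))).mul hv).const_mul
    ((1 + r ^ 2) / r ^ 2 : ℂ) |>.mul (hphase.add hcos) using 2 with t
  · rw [correlation, mul_sub, cos_sub]
    push_cast
    ring
  · ring

lemma tendsto_integral_correlation (h : IsCoin a b r) (ξ : ℝ) :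
    Tendsto (fun t : ℕ => ∫ k in -π..π, correlation a r t k (k + ξ / t)) atTop
      (𝓝 (∫ k in -π..π, ((1 + r ^ 2) / r ^ 2 * groupVelocity a k ^ 2 : ℝ) *
        (Circle.exp (ξ * groupVelocity a k) : ℂ))) := by
  have ha := h.abs_left_lt_one
  have hv := continuous_groupVelocity ha
  have hcont (t : ℕ) : Continuous fun k => correlation a r t k (k + ξ / t) := by
    obtain ⟨hL, hR⟩ := h.hasFourierSum_image t
    have hLc := hL.continuous
    have hRc := hR.continuous
    simp only [← h.conj_transform_mul_transform]
    fun_prop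
  have hsin : ∫ k in -π..π, (groupVelocity a k ^ 2 * sin (ξ * groupVelocity a k) : ℝ) = 0 :=
    integral_eq_zero_of_odd (f := fun k => groupVelocity a k ^ 2 * sin (ξ * groupVelocity a k))
      (fun k => by simp [groupVelocity_neg]) π
  have hlim : ∫ k in -π..π, ((1 + r ^ 2) / r ^ 2 * groupVelocity a k ^ 2 : ℝ) *
        (Circle.exp (ξ * groupVelocity a k) : ℂ) =
      ∫ k in -π..π, ((1 + r ^ 2) / r ^ 2 * groupVelocity a k ^ 2 *
        cos (ξ * groupVelocity a k) : ℂ) := by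
    rw [← sub_eq_zero, ← intervalIntegral.integral_sub
      (Continuous.intervalIntegrable (by fun_prop) _ _)
      (Continuous.intervalIntegrable (by fun_prop) _ _)]
    have hdiff (k : ℝ) : ((1 + r ^ 2) / r ^ 2 * groupVelocity a k ^ 2 : ℝ) *
          (Circle.exp (ξ * groupVelocity a k) : ℂ) -
        (1 + r ^ 2) / r ^ 2 * groupVelocity a k ^ 2 * cos (ξ * groupVelocity a k) =
        (1 + r ^ 2) / r ^ 2 * Complex.I *
          ((groupVelocity a k ^ 2 * sin (ξ * groupVelocity a k) : ℝ) : ℂ) := by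
      rw [Circle.coe_exp, Complex.exp_mul_I]
      push_cast
      ring
    simp only [hdiff, intervalIntegral.integral_const_mul, intervalIntegral.integral_ofReal, hsin,
      Complex.ofReal_zero, mul_zero]
  rw [hlim]
  exact intervalIntegral.tendsto_integral_filter_of_dominated_convergence
    (fun _ => 2 * ((1 + r ^ 2) / r ^ 2)) (.of_forall fun t => (hcont t).aestronglyMeasurable)
    (.of_forall fun t => .of_forall fun k _ => h.norm_correlation_le t _ _)
    intervalIntegrable_const (.of_forall fun k _ => h.tendsto_correlation ξ k)

lemma hasSum_imageWeight (h : IsCoin a b r) (t : ℕ) :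
    HasSum (imageWeight a b r t) (2 / r ^ 2) := by
  have hr := h.pos.ne'
  have hsum := h.hasSum_imageWeight_mul_exp t 0
  simp only [zero_mul, Circle.exp_zero, Circle.coe_one, mul_one, add_zero, h.correlation_self,
    intervalIntegral.integral_ofReal, intervalIntegral.integral_const_mul,
    h.integral_groupVelocity_sq] at hsum
  have hvalue : (2 * π : ℂ)⁻¹ * ((1 + r ^ 2) / r ^ 2 * (4 * π / (1 + r ^ 2)) : ℝ) =
      (2 / r ^ 2 : ℝ) := by
    rw [← Complex.ofReal_ofNat, ← Complex.ofReal_mul, ← Complex.ofReal_inv, ← Complex.ofReal_mul,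
      Complex.ofReal_inj]
    field_simp
    norm_num
  rw [hvalue] at hsum
  exact Complex.hasSum_ofReal.1 hsum

lemma tendsto_charFun_imageWeight (h : IsCoin a b r) (ξ : ℝ) :
    Tendsto (fun t : ℕ => ∫ x : ℤ, (r ^ 2 / 2 * imageWeight a b r t x) •
        (Circle.exp (ξ * (x / t)) : ℂ) ∂Measure.count) atTop
      (𝓝 (∫ k in Set.Ioc (-π) π, ((1 + r ^ 2) / (4 * π) * groupVelocity a k ^ 2) •
        (Circle.exp (ξ * groupVelocity a k) : ℂ))) := by
  have hr : (r : ℂ) ≠ 0 := mod_cast h.pos.ne'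
  have hpi : (π : ℂ) ≠ 0 := mod_cast pi_ne_zero
  have hcount (t : ℕ) : ∫ x : ℤ, (r ^ 2 / 2 * imageWeight a b r t x) •
        (Circle.exp (ξ * (x / t)) : ℂ) ∂Measure.count =
      r ^ 2 / (4 * π) * ∫ k in -π..π, correlation a r t k (k + ξ / t) := by
    rw [integral_count_eq_tsum (by
      simpa only [norm_smul, Circle.norm_coe, mul_one] using
        ((h.hasSum_imageWeight t).summable.mul_left _).norm)]
    have hsum := (h.hasSum_imageWeight_mul_exp t (ξ / t)).mul_left (r ^ 2 / 2 : ℂ)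
    have hcoef : (r ^ 2 / 2 * (2 * (π : ℂ))⁻¹ : ℂ) = r ^ 2 / (4 * π) := by
      field_simp
      norm_num
    rw [← mul_assoc, hcoef] at hsum
    refine (hsum.congr_fun fun x => ?_).tsum_eq
    rw [Complex.real_smul, mul_div_left_comm, mul_comm (x : ℝ)]
    push_cast
    ring
  have hlim : ∫ k in Set.Ioc (-π) π, ((1 + r ^ 2) / (4 * π) * groupVelocity a k ^ 2) •
        (Circle.exp (ξ * groupVelocity a k) : ℂ) =
      r ^ 2 / (4 * π) * ∫ k in -π..π, ((1 + r ^ 2) / r ^ 2 * groupVelocity a k ^ 2 : ℝ) *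
        (Circle.exp (ξ * groupVelocity a k) : ℂ) := by
    rw [← intervalIntegral.integral_const_mul,
      intervalIntegral.integral_of_le (by linarith [pi_pos])]
    refine integral_congr_ae (.of_forall fun k => ?_)
    simp only [Complex.real_smul]
    push_cast
    field_simp
  simp only [hcount, hlim]
  exact (h.tendsto_integral_correlation ξ).const_mul _

lemma tendsto_integral_imageWeight (h : IsCoin a b r) {g : ℝ → ℝ} (hg : Continuous g) {M : ℝ}
    (hgM : ∀ x, ‖g x‖ ≤ M) :
    Tendsto (fun t : ℕ => ∫ x : ℤ, r ^ 2 / 2 * imageWeight a b r t x * g (x / t) ∂Measure.count)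
      atTop (𝓝 (∫ k in -π..π,
        (1 + r ^ 2) / (4 * π) * groupVelocity a k ^ 2 * g (groupVelocity a k))) := by
  have hr := h.pos.ne'
  have hpi : -π ≤ π := by linarith [pi_pos]
  have hv := continuous_groupVelocity h.abs_left_lt_one
  have hw (t : ℕ) : Summable fun x => ‖r ^ 2 / 2 * imageWeight a b r t x‖ :=
    ((h.hasSum_imageWeight t).summable.mul_left _).norm
  have hw1 (t : ℕ) : ∫ x : ℤ, r ^ 2 / 2 * imageWeight a b r t x ∂Measure.count = 1 := by
    rw [integral_count_eq_tsum (hw t), tsum_mul_left, (h.hasSum_imageWeight t).tsum_eq]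
    field_simp
  have hu1 : ∫ k in -π..π, (1 + r ^ 2) / (4 * π) * groupVelocity a k ^ 2 = 1 := by
    rw [intervalIntegral.integral_const_mul, h.integral_groupVelocity_sq]
    field_simp
  rw [intervalIntegral.integral_of_le hpi] at hu1 ⊢
  exact tendsto_integral_of_tendsto_charFun (fun t => integrable_count_iff.2 (hw t))
    (fun t x => mul_nonneg (by positivity) (imageWeight_nonneg a b r t x)) hw1
    (fun t => measurable_of_countable _) (Continuous.integrableOn_Ioc (by fun_prop))
    (fun k => by positivity) hu1 hv.measurable h.tendsto_charFun_imageWeight hg hgM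

lemma tendsto_tsum_imageWeight (h : IsCoin a b r) {g : ℝ → ℝ} (hg : Continuous g) {M : ℝ}
    (hgM : ∀ x, ‖g x‖ ≤ M) :
    Tendsto (fun t : ℕ => ∑' x : ℤ, imageWeight a b r t x * g (x / t)) atTop
      (𝓝 ((1 + r ^ 2) / (2 * π * r ^ 2) *
        ∫ k in -π..π, groupVelocity a k ^ 2 * g (groupVelocity a k))) := by
  have hr := h.pos.ne'
  have hsummable (t : ℕ) :
      Summable fun x : ℤ => ‖r ^ 2 / 2 * imageWeight a b r t x * g (x / t)‖ :=
    (((h.hasSum_imageWeight t).summable.mul_left (r ^ 2 / 2)).norm.mul_right M).of_nonneg_of_le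
      (fun _ => norm_nonneg _) fun x => by
        rw [norm_mul]
        gcongr
        exact hgM _
  have hlim := (h.tendsto_integral_imageWeight hg hgM).const_mul (2 / r ^ 2)
  simp only [integral_count_eq_tsum (hsummable _)] at hlim
  simp only [mul_assoc, tsum_mul_left, intervalIntegral.integral_const_mul] at hlim
  convert hlim using 2 with t
  · field_simp
  · rw [← mul_assoc]
    congr 1
    field_simp
    norm_num

end IsCoin

end ImageWalk

section HalfLine

variable {a b r s : ℝ}

namespace IsCoin

lemma integral_groupVelocity_mul_max (h : IsCoin a b r) :
    ∫ k in -π..π, groupVelocity a k * max (groupVelocity a k) 0 = 2 * π / (1 + r ^ 2) := by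
  have hv := continuous_groupVelocity h.abs_left_lt_one
  have hodd : Function.Odd fun k =>
      groupVelocity a k * max (groupVelocity a k) 0 - groupVelocity a k ^ 2 / 2 := by
    intro k
    simp only [groupVelocity_neg]
    rcases le_total (groupVelocity a k) 0 with hk | hk
    · rw [max_eq_right hk, max_eq_left (neg_nonneg.2 hk)]
      ring
    · rw [max_eq_left hk, max_eq_right (neg_nonpos.2 hk)]
      ring
  have hdiff := integral_eq_zero_of_odd hodd π
  rw [intervalIntegral.integral_sub (Continuous.intervalIntegrable (by fun_prop) _ _)
    (Continuous.intervalIntegrable (by fun_prop) _ _), intervalIntegral.integral_div,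
    h.integral_groupVelocity_sq] at hdiff
  linear_combination hdiff

lemma integral_Ico_eq_integral_groupVelocity (h : IsCoin a b r) {φ : ℝ → ℝ} (hφ : Continuous φ) :
    ∫ x in Set.Ico 0 a, φ x * ((r ^ 2 - 1) * x ^ 2 / (π * (1 - x ^ 2) * √(a ^ 2 - x ^ 2))) =
      (1 + r ^ 2) / (2 * π) *
        ∫ k in -π..π, groupVelocity a k * max (groupVelocity a k) 0 * φ (groupVelocity a k) := by
  have hb : √(1 - a ^ 2) = b := by
    rw [← h.sq_add_sq, add_sub_cancel_left, sqrt_sq h.right_pos.le]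
  have hψ : Continuous fun y => y * max y 0 * φ y := by fun_prop
  have hdensity : ∀ x ∈ Set.Ico 0 a,
      φ x * ((r ^ 2 - 1) * x ^ 2 / (π * (1 - x ^ 2) * √(a ^ 2 - x ^ 2))) =
        (1 + r ^ 2) * (x * max x 0 * φ x * konnoDensity a x) := fun x hx => by
    rw [konnoDensity, hb, max_eq_left hx.1, ← h.right_mul_one_add_sq]
    ring
  have hsubset : ∫ x in Set.Ico 0 a, x * max x 0 * φ x * konnoDensity a x =
      ∫ x in Set.Ioo (-a) a, x * max x 0 * φ x * konnoDensity a x := by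
    refine (setIntegral_eq_of_subset_of_forall_sdiff_eq_zero measurableSet_Ioo
      (fun x hx => ⟨(neg_neg_of_pos h.left_pos).trans_le hx.1, hx.2⟩) fun x hx => ?_).symm
    have hx0 : x ≤ 0 := le_of_not_ge fun hx0 => hx.2 ⟨hx0, hx.1.2⟩
    rw [max_eq_right hx0, mul_zero, zero_mul, zero_mul]
  rw [setIntegral_congr_fun measurableSet_Ico hdensity, integral_const_mul, hsubset,
    integral_comp_groupVelocity h.left_pos h.left_lt_one hψ]
  field_simp

lemma tendsto_tsum_imageWeight_sub (h : IsCoin a b r) {g : ℝ → ℝ} (hg : Continuous g) {M : ℝ}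
    (hgM : ∀ x, ‖g x‖ ≤ M) :
    Tendsto (fun t : ℕ => ∑' x : ℕ, imageWeight a b r t x * (g (x / t) - g 0)) atTop
      (𝓝 (1 / r ^ 2 * ((∫ x in Set.Ico 0 a,
        g x * ((r ^ 2 - 1) * x ^ 2 / (π * (1 - x ^ 2) * √(a ^ 2 - x ^ 2)))) - g 0))) := by
  have hr := h.pos.ne'
  have hv := continuous_groupVelocity h.abs_left_lt_one
  have hnat (t : ℕ) : ∑' x : ℤ, imageWeight a b r t x * (g (max (x / t) 0) - g 0) =
      ∑' x : ℕ, imageWeight a b r t x * (g (x / t) - g 0) := by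
    rw [← (Nat.cast_injective (R := ℤ)).tsum_eq]
    · refine tsum_congr fun x => ?_
      rw [Int.cast_natCast, max_eq_left (by positivity)]
    · intro x hx
      refine ⟨x.toNat, Int.toNat_of_nonneg <| le_of_not_gt fun hneg => hx ?_⟩
      have hxt : (x / t : ℝ) ≤ 0 := div_nonpos_of_nonpos_of_nonneg (mod_cast hneg.le) t.cast_nonneg
      simp only [max_eq_right hxt, sub_self, mul_zero]
  have hsplit (k : ℝ) :
      groupVelocity a k ^ 2 * (g (max (groupVelocity a k) 0) - g 0) =
        groupVelocity a k * max (groupVelocity a k) 0 * g (groupVelocity a k) -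
          groupVelocity a k * max (groupVelocity a k) 0 * g 0 := by
    rcases le_total (groupVelocity a k) 0 with hk | hk
    · rw [max_eq_right hk]
      ring
    · rw [max_eq_left hk]
      ring
  have hlim := h.tendsto_tsum_imageWeight (g := fun y => g (max y 0) - g 0) (M := M + M)
    (by fun_prop) fun y => (norm_sub_le _ _).trans (add_le_add (hgM _) (hgM _))
  simp only [hnat, hsplit] at hlim
  rw [intervalIntegral.integral_sub (Continuous.intervalIntegrable (by fun_prop) _ _)
    (Continuous.intervalIntegrable (by fun_prop) _ _), intervalIntegral.integral_mul_const,
    h.integral_groupVelocity_mul_max] at hlim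
  rw [h.integral_Ico_eq_integral_groupVelocity hg]
  convert hlim using 2
  field_simp

end IsCoin

lemma psi_eq_zero_of_lt (a b s : ℝ) {t x : ℕ} (htx : t < x) : psi a b s t x = 0 := by
  induction t generalizing x with
  | zero => exact if_neg htx.ne'
  | succ t ih =>
    have hnext := ih (x := x + 1) (by omega)
    have hprev := ih (x := x - 1) (by omega)
    have hx0 : x ≠ 0 := by omega
    have hx1 : x ≠ 1 := by omega
    simp [psi, hnext, hprev, hx0, hx1]

lemma prob_eq_zero_of_lt (a b s : ℝ) {t x : ℕ} (htx : t < x) : prob a b s t x = 0 := by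
  simp [prob, psi_eq_zero_of_lt a b s htx]

lemma summable_prob_mul (a b s : ℝ) (t : ℕ) (g : ℕ → ℝ) :
    Summable fun x => prob a b s t x * g x := by
  refine summable_of_ne_finset_zero (s := Finset.range (t + 1)) fun x hx => ?_
  rw [prob_eq_zero_of_lt a b s (by simpa using hx), zero_mul]

lemma psi_zero_right (a b s : ℝ) (t : ℕ) : (psi a b s t 0).2 = 0 := by
  cases t <;> simp [psi]

lemma norm_sq_rotation (hab : a ^ 2 + b ^ 2 = 1) (u v : ℂ) :
    ‖a * u - b * v‖ ^ 2 + ‖b * u + a * v‖ ^ 2 = ‖u‖ ^ 2 + ‖v‖ ^ 2 := by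
  simp only [Complex.sq_norm, Complex.normSq_apply, Complex.sub_re, Complex.sub_im, Complex.add_re,
    Complex.add_im, Complex.re_ofReal_mul, Complex.im_ofReal_mul]
  linear_combination (u.re ^ 2 + u.im ^ 2 + v.re ^ 2 + v.im ^ 2) * hab

lemma norm_sq_psi_succ_add (hab : a ^ 2 + b ^ 2 = 1) (s : ℝ) (t x : ℕ) :
    ‖(psi a b s (t + 1) x).1‖ ^ 2 + ‖(psi a b s (t + 1) (x + 2)).2‖ ^ 2 =
      prob a b s t (x + 1) := by
  have hx0 : x + 2 ≠ 0 := by omega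
  have hx1 : x + 2 ≠ 1 := by omega
  simp only [psi, if_neg hx0, if_neg hx1]
  exact norm_sq_rotation hab _ _

lemma norm_sq_psi_succ_wall (hs : s ^ 2 = 1) (t : ℕ) :
    ‖(psi a b s (t + 1) 1).2‖ ^ 2 = prob a b s t 0 := by
  rw [prob, psi_zero_right, norm_zero, zero_pow two_ne_zero, add_zero]
  simp [psi, mul_pow, hs]

lemma tsum_prob (hab : a ^ 2 + b ^ 2 = 1) (hs : s ^ 2 = 1) (t : ℕ) :
    ∑' x, prob a b s t x = 1 := by
  induction t with
  | zero =>
    rw [tsum_eq_single 0 fun x hx => prob_eq_zero_of_lt a b s (Nat.pos_of_ne_zero hx)]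
    simp [prob, psi]
  | succ t ih =>
    have hsummable (φ : ℕ → ℂ) (hφ : ∀ x, t + 1 < x → φ x = 0) :
        Summable fun x => ‖φ x‖ ^ 2 :=
      summable_of_ne_finset_zero (s := Finset.range (t + 2)) fun x hx => by
        rw [hφ x (not_lt.1 (mt Finset.mem_range.2 hx)), norm_zero, zero_pow two_ne_zero]
    have hL := hsummable (fun x => (psi a b s (t + 1) x).1) fun x hx => by
      rw [psi_eq_zero_of_lt a b s hx, Prod.fst_zero]
    have hR := hsummable (fun x => (psi a b s (t + 1) x).2) fun x hx => by
      rw [psi_eq_zero_of_lt a b s hx, Prod.snd_zero]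
    have hwall : ∑ x ∈ Finset.range 2, ‖(psi a b s (t + 1) x).2‖ ^ 2 = prob a b s t 0 := by
      rw [Finset.sum_range_succ, Finset.sum_range_one, psi_zero_right, norm_zero,
        zero_pow two_ne_zero, zero_add, norm_sq_psi_succ_wall hs]
    calc ∑' x, prob a b s (t + 1) x
        = ∑' x, ‖(psi a b s (t + 1) x).1‖ ^ 2 + (prob a b s t 0 +
            ∑' x, ‖(psi a b s (t + 1) (x + 2)).2‖ ^ 2) := by
          rw [← hwall, hR.sum_add_tsum_nat_add 2, ← hL.tsum_add hR]
          rfl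
      _ = prob a b s t 0 + ∑' x, prob a b s t (x + 1) := by
          rw [add_left_comm, ← hL.tsum_add ((summable_nat_add_iff 2).2 hR)]
          simp only [norm_sq_psi_succ_add hab]
      _ = ∑' x, prob a b s t x := by
          have hprob : Summable (prob a b s t) := by simpa using summable_prob_mul a b s t 1
          exact hprob.tsum_eq_zero_add.symm
      _ = 1 := ih

lemma abs_norm_add_sq_sub_norm_sq_le {E : Type*} [SeminormedAddCommGroup E] (u v : E) :
    |‖u + v‖ ^ 2 - ‖v‖ ^ 2| ≤ ‖u‖ * (‖u‖ + 2 * ‖v‖) := by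
  have hsub : |‖u + v‖ - ‖v‖| ≤ ‖u‖ := by simpa using abs_norm_sub_norm_le (u + v) v
  have hadd : |‖u + v‖ + ‖v‖| ≤ ‖u‖ + 2 * ‖v‖ := by
    rw [abs_of_nonneg (by positivity)]
    linarith [norm_add_le u v]
  rw [sq_sub_sq, abs_mul, mul_comm]
  gcongr

namespace IsCoin

lemma psi_eq_boundState_add_lineWalk (h : IsCoin a b r) (t x : ℕ) :
    (psi a b (-1) t x).1 = boundState r t x + (lineWalk a b (imageState r) t x).1 ∧
      (psi a b (-1) t (x + 1)).2 =
        -r * boundState r t (x + 1) + (lineWalk a b (imageState r) t (x + 1 : ℕ)).2 := by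
  have hr := h.pos.ne'
  have hadd : (a + b * r : ℂ) = r := mod_cast h.add_mul_eq
  have hsub : (b - a * r : ℂ) = -1 := mod_cast h.sub_mul_eq
  induction t generalizing x with
  | zero =>
    have himage (n : ℕ) : imageAmplitude r n = (if n = 0 then 1 else 0) - boundState r 0 n := by
      rw [imageAmplitude, Nat.cast_injective.extend_apply]
    simp only [psi, lineWalk, imageState, himage, if_neg x.succ_ne_zero]
    constructor
    · split_ifs <;> ring
    · ring
  | succ t ih =>
    constructor
    · obtain ⟨hL, -⟩ := ih (x + 1)
      have hR := (ih x).2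
      simp only [psi, lineWalk, hL, hR, boundState_succ_left hr, Nat.cast_succ]
      linear_combination boundState r t (x + 1) * hadd
    · have hL := (ih x).1
      have hcast : ((x + 1 : ℕ) : ℤ) - 1 = x := by omega
      simp only [psi, lineWalk, hcast, if_neg x.succ_ne_zero]
      rw [neg_mul, boundState_succ_right hr]
      rcases x with - | x
      · have hwall := h.lineWalk_imageState_zero t
        rw [if_pos rfl, hL, Nat.cast_zero, hwall]
        push_cast
        linear_combination -(lineWalk a b (imageState r) t 0).1 * hsub
      · have hR := (ih x).2
        rw [if_neg (by omega), Nat.add_sub_cancel, hL, hR]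
        linear_combination boundState r t (x + 1) * hsub

lemma abs_prob_sub_imageWeight_le (h : IsCoin a b r) (t : ℕ) {x : ℕ} (hx : x ≠ 0) :
    |prob a b (-1) t x - imageWeight a b r t x| ≤ 10 * r * r⁻¹ ^ x := by
  obtain ⟨y, rfl⟩ := Nat.exists_eq_add_one_of_ne_zero hx
  have hr := h.one_lt
  have hr0 := h.pos
  have hq : r⁻¹ ^ (y + 1) ≤ 1 := pow_le_one₀ (by positivity) (inv_le_one_of_one_le₀ hr.le)
  have hrq : r * r⁻¹ ^ (y + 1) ≤ 1 := by
    rw [pow_succ', mul_inv_cancel_left₀ hr0.ne']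
    exact pow_le_one₀ (by positivity) (inv_le_one_of_one_le₀ hr.le)
  have hbound := norm_boundState_le hr.le t (y + 1)
  have hweight : imageWeight a b r t (y + 1 : ℕ) ≤ 2 :=
    (le_hasSum (h.hasSum_imageWeight t) _ fun x _ => imageWeight_nonneg a b r t x).trans
      (div_le_self zero_le_two (one_le_pow₀ hr.le))
  rw [imageWeight] at hweight
  have hL : ‖(lineWalk a b (imageState r) t (y + 1 : ℕ)).1‖ ≤ 2 := by nlinarith
  have hR : ‖(lineWalk a b (imageState r) t (y + 1 : ℕ)).2‖ ≤ 2 := by nlinarith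
  have hrbound : ‖(-r * boundState r t (y + 1) : ℂ)‖ ≤ r * r⁻¹ ^ (y + 1) := by
    rw [norm_mul, norm_neg, Complex.norm_of_nonneg hr0.le]
    gcongr
  rw [prob, imageWeight, (h.psi_eq_boundState_add_lineWalk t (y + 1)).1,
    (h.psi_eq_boundState_add_lineWalk t y).2, add_sub_add_comm]
  calc |_ + _| ≤ r⁻¹ ^ (y + 1) * (1 + 2 * 2) + r * r⁻¹ ^ (y + 1) * (1 + 2 * 2) := by
        refine (abs_add_le _ _).trans (add_le_add ?_ ?_)
        · refine (abs_norm_add_sq_sub_norm_sq_le _ _).trans ?_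
          gcongr
          exact hbound.trans hq
        · refine (abs_norm_add_sq_sub_norm_sq_le _ _).trans ?_
          gcongr
          exact hrbound.trans hrq
    _ ≤ 10 * r * r⁻¹ ^ (y + 1) := by nlinarith [pow_pos (inv_pos.2 hr0) (y + 1)]

lemma abs_prob_sub_imageWeight_mul_le (h : IsCoin a b r) (g : ℝ → ℝ) (t x : ℕ) :
    |(prob a b (-1) t x - imageWeight a b r t x) * (g (x / t) - g 0)| ≤
      10 * r * r⁻¹ ^ x * |g (x / t) - g 0| := by
  rcases eq_or_ne x 0 with rfl | hx
  · simp
  · rw [abs_mul]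
    gcongr
    exact h.abs_prob_sub_imageWeight_le t hx

lemma tendsto_tsum_prob_sub_imageWeight (h : IsCoin a b r) {g : ℝ → ℝ} (hg : Continuous g) {M : ℝ}
    (hgM : ∀ x, ‖g x‖ ≤ M) :
    Tendsto (fun t : ℕ => ∑' x : ℕ,
      (prob a b (-1) t x - imageWeight a b r t x) * (g (x / t) - g 0)) atTop (𝓝 0) := by
  have hr := h.pos
  have hgeom : Summable fun x : ℕ => 10 * r * r⁻¹ ^ x * (M + M) :=
    ((summable_geometric_of_lt_one (inv_nonneg.2 h.pos.le)
      (inv_lt_one_of_one_lt₀ h.one_lt)).mul_left _).mul_right _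
  have hpointwise (x : ℕ) : Tendsto (fun t : ℕ =>
      (prob a b (-1) t x - imageWeight a b r t x) * (g (x / t) - g 0)) atTop (𝓝 0) := by
    have hlim : Tendsto (fun t : ℕ => |g (x / t) - g 0|) atTop (𝓝 |g 0 - g 0|) :=
      (((hg.tendsto 0).comp (tendsto_const_div_atTop_nhds_zero_nat (x : ℝ))).sub_const (g 0)).abs
    have hmul := hlim.const_mul (10 * r * r⁻¹ ^ x)
    rw [sub_self, abs_zero, mul_zero] at hmul
    exact squeeze_zero_norm (fun t => h.abs_prob_sub_imageWeight_mul_le g t x) hmul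
  simpa only [tsum_zero] using tendsto_tsum_of_dominated_convergence hgeom hpointwise
    (.of_forall fun t x => (h.abs_prob_sub_imageWeight_mul_le g t x).trans (by
      gcongr
      exact (norm_sub_le _ _).trans (add_le_add (hgM _) (hgM _))))

lemma tendsto_tsum_prob (h : IsCoin a b r) {g : ℝ → ℝ} (hg : Continuous g) {M : ℝ}
    (hgM : ∀ x, ‖g x‖ ≤ M) :
    Tendsto (fun t : ℕ => ∑' x : ℕ, prob a b (-1) t x * g (x / t)) atTop
      (𝓝 ((1 - 1 / r ^ 2) * g 0 + 1 / r ^ 2 * ∫ x in Set.Ico 0 a,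
        g x * ((r ^ 2 - 1) * x ^ 2 / (π * (1 - x ^ 2) * √(a ^ 2 - x ^ 2))))) := by
  have hsplit (t : ℕ) : ∑' x : ℕ, prob a b (-1) t x * g (x / t) = g 0 +
      (∑' x : ℕ, (prob a b (-1) t x - imageWeight a b r t x) * (g (x / t) - g 0) +
        ∑' x : ℕ, imageWeight a b r t x * (g (x / t) - g 0)) := by
    have hprob : Summable (prob a b (-1) t) := by simpa using summable_prob_mul a b (-1) t 1
    have hprobg := summable_prob_mul a b (-1) t fun x => g (x / t) - g 0
    have himage : Summable fun x : ℕ => imageWeight a b r t x * (g (x / t) - g 0) :=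
      (((h.hasSum_imageWeight t).summable.comp_injective Nat.cast_injective).mul_right
        (M + M)).of_norm_bounded fun x => by
          rw [norm_mul, norm_of_nonneg (imageWeight_nonneg a b r t x)]
          exact mul_le_mul_of_nonneg_left
            ((norm_sub_le _ _).trans (add_le_add (hgM _) (hgM _))) (imageWeight_nonneg a b r t x)
    simp only [sub_mul]
    rw [hprobg.tsum_sub himage, sub_add_cancel]
    simp only [mul_sub] at hprobg ⊢
    rw [(summable_prob_mul a b (-1) t fun x => g (x / t)).tsum_sub (hprob.mul_right _),
      tsum_mul_right, tsum_prob h.sq_add_sq (by norm_num)]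
    ring
  simp only [hsplit]
  convert ((h.tendsto_tsum_prob_sub_imageWeight hg hgM).add
    (h.tendsto_tsum_imageWeight_sub hg hgM)).const_add (g 0) using 2
  ring

lemma tendsto_tsum_prob_of_continuousOn (h : IsCoin a b r) {g : ℝ → ℝ}
    (hg : ContinuousOn g (Set.Icc 0 1)) :
    Tendsto (fun t : ℕ => ∑' x : ℕ, prob a b (-1) t x * g (x / t)) atTop
      (𝓝 ((1 - 1 / r ^ 2) * g 0 + 1 / r ^ 2 * ∫ x in Set.Ico 0 a,
        g x * ((r ^ 2 - 1) * x ^ 2 / (π * (1 - x ^ 2) * √(a ^ 2 - x ^ 2))))) := by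
  let g' : ℝ → ℝ := Set.IccExtend zero_le_one ((Set.Icc 0 1).domRestrict g)
  have hg' : Set.EqOn g' g (Set.Icc 0 1) := fun x hx => Set.IccExtend_of_mem _ _ hx
  obtain ⟨M, hM⟩ := isCompact_Icc.exists_bound_of_continuousOn hg
  have hlim := h.tendsto_tsum_prob (g := g') (Continuous.Icc_extend' hg.domRestrict)
    fun x => hM _ (Set.projIcc 0 1 zero_le_one x).2
  have hprob (t x : ℕ) : prob a b (-1) t x * g' (x / t) = prob a b (-1) t x * g (x / t) := by
    rcases le_or_gt x t with hxt | htx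
    · rw [hg' ⟨by positivity, div_le_one_of_le₀ (mod_cast hxt) t.cast_nonneg⟩]
    · rw [prob_eq_zero_of_lt a b _ htx, zero_mul, zero_mul]
  have hint : ∫ x in Set.Ico 0 a,
        g' x * ((r ^ 2 - 1) * x ^ 2 / (π * (1 - x ^ 2) * √(a ^ 2 - x ^ 2))) =
      ∫ x in Set.Ico 0 a, g x * ((r ^ 2 - 1) * x ^ 2 / (π * (1 - x ^ 2) * √(a ^ 2 - x ^ 2))) :=
    setIntegral_congr_fun measurableSet_Ico fun x hx => by
      simp only [hg' ⟨hx.1, (hx.2.trans h.left_lt_one).le⟩]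
  simpa only [hprob, hint, hg' (Set.left_mem_Icc.2 zero_le_one)] using hlim

end IsCoin

lemma IsCoin.of_one_lt (hr : 1 < r) :
    IsCoin (2 * r / (1 + r ^ 2)) ((r ^ 2 - 1) / (1 + r ^ 2)) r where
  one_lt := hr
  add_mul_eq := by
    field_simp
    ring
  sub_mul_eq := by
    field_simp
    ring

theorem half_line_caseB_weak_convergence_general {κ a b : ℝ} (hκ : 2 < κ)
    (ha : a = 2 * √(κ - 1) / κ) (hb : b = (κ - 2) / κ) {f g : ℝ → ℝ}
    (hf : ∀ x ∈ Set.Ico 0 a, f x = (κ - 2) * x ^ 2 / (π * (1 - x ^ 2) * √(a ^ 2 - x ^ 2)))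
    (hg : ContinuousOn g (Set.Icc 0 1)) :
    Tendsto (fun t : ℕ => ∑' x : ℕ, prob a b (-1) t x * g (x / t)) atTop
      (𝓝 ((κ - 2) / (κ - 1) * g 0 + 1 / (κ - 1) * ∫ x in Set.Ico 0 a, g x * f x)) := by
  have hr2 : √(κ - 1) ^ 2 = κ - 1 := sq_sqrt (by linarith)
  have hcoin : IsCoin a b (√(κ - 1)) := by
    convert IsCoin.of_one_lt (lt_sqrt_of_sq_lt (by linarith : (1 : ℝ) ^ 2 < κ - 1)) using 1
    · rw [ha, hr2, add_sub_cancel]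
    · rw [hb, hr2]
      ring
  have hlim := hcoin.tendsto_tsum_prob_of_continuousOn hg
  have hatom : 1 - 1 / (κ - 1) = (κ - 2) / (κ - 1) := by
    rw [one_sub_div (by linarith)]
    ring
  rw [hr2, hatom, show κ - 1 - 1 = κ - 2 by ring] at hlim
  rwa [setIntegral_congr_fun measurableSet_Ico fun x hx => congrArg (g x * ·) (hf x hx)]

end HalfLine

/-- Weak convergence theorem, Case (B): with `s = −1`, `X_t/t` converges
weakly to `((κ−2)/(κ−1))·δ_0 + (1/(κ−1))·f_κ(x)dx`: for every bounded continuous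
`g : ℝ → ℝ`,
`lim_{t→∞} ∑_{x∈ℤ₊} P(X_t = x)·g(x/t) = ((κ−2)/(κ−1))·g(0) + (1/(κ−1))·∫_0^a g(x)·f_κ(x) dx`. -/
theorem half_line_caseB_weak_convergence
    (κ : ℕ) (hκ : 3 ≤ κ) (a b : ℝ)
    (ha : a = 2 * Real.sqrt ((κ : ℝ) - 1) / κ) (hb : b = ((κ : ℝ) - 2) / κ)
    (f : ℝ → ℝ)
    (hf : ∀ x : ℝ, f x = if 0 ≤ x ∧ x < a then
      ((κ : ℝ) - 2) * x ^ 2 / (Real.pi * (1 - x ^ 2) * Real.sqrt (a ^ 2 - x ^ 2)) else 0)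
    (g : ℝ → ℝ) (hg : Continuous g) (hgbd : ∃ M : ℝ, ∀ x : ℝ, |g x| ≤ M) :
    Tendsto (fun t : ℕ => ∑' x : ℕ, prob a b (-1) t x * g ((x : ℝ) / (t : ℝ)))
      atTop (𝓝 ((((κ : ℝ) - 2) / ((κ : ℝ) - 1)) * g 0
        + (1 / ((κ : ℝ) - 1)) * ∫ x in Set.Ico (0 : ℝ) a, g x * f x)) :=
  half_line_caseB_weak_convergence_general (mod_cast hκ) ha hb
    (fun x hx => (hf x).trans (if_pos hx)) hg.continuousOn

end
end

section
/- Generating function of the left-moving amplitude away from the wall: for every sign s ∈ {+1, −1}, every x ≥ 1 and every real z with 0 < z < 1, the (absolutely convergent) series Σ_{t=0}^∞ Ψ_t^L(x)·z^t equals m·λ(z)^{x−1}·(a·z − λ(z))·ν(z)/(z²−1). -/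
noncomputable section

/-!
Since the walk preserves total mass, its amplitudes are bounded by `1`, so for `‖z‖ < 1` the
generating functions `L(x)`, `R(x)` of both chiralities converge and are bounded in `x`. The
evolution becomes a stationary two-term recursion away from the wall. Its characteristic equation
`a z λ² - (z² + 1) λ + a z = 0` has roots `λ`, `λ⁻¹`, so with `‖λ‖ < 1` boundedness kills the
growing mode: `z b L(x) = (λ - a z) R(x)` and `R` is geometric with ratio `λ`. The wall condition
`R(1) = s z L(0)` and the equation at the origin then determine everything; rationalising the
denominator of `L(0)` with the conjugate root yields `ν(z) / (1 - z²)`.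
-/

section BoundedCoefficients

variable {𝕜 : Type*} [NormedField 𝕜] {f : ℕ → 𝕜} {z : 𝕜} {C : ℝ}

lemma norm_mul_pow_le_of_norm_le (hf : ∀ t, ‖f t‖ ≤ C) (t : ℕ) :
    ‖f t * z ^ t‖ ≤ C * ‖z‖ ^ t := by
  rw [norm_mul, norm_pow]
  gcongr
  exact hf t

lemma summable_mul_pow_of_norm_le [CompleteSpace 𝕜] (hz : ‖z‖ < 1)
    (hf : ∀ t, ‖f t‖ ≤ C) :
    Summable fun t ↦ f t * z ^ t :=
  .of_norm_bounded ((summable_geometric_of_lt_one (norm_nonneg z) hz).mul_left C)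
    (norm_mul_pow_le_of_norm_le hf)

lemma norm_tsum_mul_pow_le (hz : ‖z‖ < 1) (hf : ∀ t, ‖f t‖ ≤ C) :
    ‖∑' t, f t * z ^ t‖ ≤ C * (1 - ‖z‖)⁻¹ :=
  tsum_of_norm_bounded ((hasSum_geometric_of_lt_one (norm_nonneg z) hz).mul_left C)
    (norm_mul_pow_le_of_norm_le hf)

lemma tsum_mul_pow_eq_zero_add (hf : Summable fun t ↦ f t * z ^ t) :
    ∑' t, f t * z ^ t = f 0 + z * ∑' t, f (t + 1) * z ^ t := by
  rw [hf.tsum_eq_zero_add, pow_zero, mul_one, ← tsum_mul_left]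
  congr 2 with t
  ring

end BoundedCoefficients

lemma eq_zero_of_eq_smul_succ_of_norm_le {𝕜 E : Type*} [NormedField 𝕜] [NormedAddCommGroup E]
    [NormedSpace 𝕜 E] {c : 𝕜} {u : ℕ → E} {C : ℝ} (hc : ‖c‖ < 1)
    (hrec : ∀ n, u n = c • u (n + 1)) (hu : ∀ n, ‖u n‖ ≤ C) (n : ℕ) : u n = 0 := by
  have iterate (k : ℕ) : u n = c ^ k • u (n + k) := by
    induction k with
    | zero => simp
    | succ k ih => rw [ih, hrec (n + k), smul_smul, pow_succ, add_assoc]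
  have bound (k : ℕ) : ‖u n‖ ≤ ‖c‖ ^ k * C := by
    rw [iterate k, norm_smul, norm_pow]
    gcongr
    exact hu _
  have limit : Filter.Tendsto (fun k ↦ ‖c‖ ^ k * C) Filter.atTop (nhds 0) := by
    simpa using (tendsto_pow_atTop_nhds_zero_of_lt_one (norm_nonneg c) hc).mul_const C
  exact norm_le_zero_iff.1 (ge_of_tendsto' limit bound)

lemma abs_sub_sqrt_div_lt_one {p q : ℝ} (hp : p ≠ 0) (hpq : |p| < q) :
    |(q - √(q ^ 2 - p ^ 2)) / p| < 1 := by
  have hp' : 0 < |p| := abs_pos.2 hp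
  have sqrt_le : √(q ^ 2 - p ^ 2) ≤ q :=
    Real.sqrt_le_iff.2 ⟨by linarith, by linarith [sq_nonneg p]⟩
  have lt_sqrt : q - |p| < √(q ^ 2 - p ^ 2) := by
    apply Real.lt_sqrt_of_sq_lt
    nlinarith [sq_abs p]
  rw [abs_div, abs_of_nonneg (sub_nonneg.2 sqrt_le), div_lt_one hp']
  linarith

lemma radicand_eq_sq_sub_sq (a z : ℝ) :
    z ^ 4 + 2 * (1 - 2 * a ^ 2) * z ^ 2 + 1 = (z ^ 2 + 1) ^ 2 - (2 * a * z) ^ 2 := by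
  ring

lemma abs_two_mul_mul_lt_sq_add_one {a : ℝ} (ha : a ^ 2 < 1) (z : ℝ) :
    |2 * a * z| < z ^ 2 + 1 := by
  refine abs_lt_of_sq_lt_sq (sub_pos.1 ?_) (by positivity)
  calc 0 < (1 - a ^ 2) * (z ^ 2 + 1) ^ 2 + a ^ 2 * (z ^ 2 - 1) ^ 2 := by
        have := sub_pos.2 ha
        positivity
    _ = (z ^ 2 + 1) ^ 2 - (2 * a * z) ^ 2 := by ring

lemma radicand_pos {a : ℝ} (ha : a ^ 2 < 1) (z : ℝ) :
    0 < z ^ 4 + 2 * (1 - 2 * a ^ 2) * z ^ 2 + 1 := by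
  rw [radicand_eq_sq_sub_sq, sub_pos, sq_lt_sq]
  exact (abs_two_mul_mul_lt_sq_add_one ha z).trans_le (le_abs_self _)

lemma abs_characteristic_root_lt_one {a z : ℝ} (ha0 : a ≠ 0) (ha : a ^ 2 < 1) (hz : z ≠ 0) :
    |(z ^ 2 + 1 - √(z ^ 4 + 2 * (1 - 2 * a ^ 2) * z ^ 2 + 1)) / (2 * a * z)| < 1 := by
  rw [radicand_eq_sq_sub_sq]
  exact abs_sub_sqrt_div_lt_one (by positivity) (abs_two_mul_mul_lt_sq_add_one ha z)

lemma one_sub_sq_ne_zero_of_norm_lt_one {𝕜 : Type*} [NormedField 𝕜] {z : 𝕜} (hz : ‖z‖ < 1) :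
    1 - z ^ 2 ≠ 0 := by
  intro h
  have norm_sq : ‖z‖ ^ 2 = 1 := by rw [← norm_pow, ← sub_eq_zero.1 h, norm_one]
  exact (pow_lt_one₀ (norm_nonneg z) hz two_ne_zero).ne norm_sq

lemma conjugate_denominators_mul {R : Type*} [CommRing R] {a b m z Δ : R}
    (hab : a ^ 2 + b ^ 2 = 1) (hmb : (m * b) ^ 2 = 1)
    (hΔ : Δ ^ 2 = z ^ 4 + 2 * (1 - 2 * a ^ 2) * z ^ 2 + 1) :
    (2 - m + m * z ^ 2 + m * Δ) * (2 - m + m * z ^ 2 - m * Δ) = 4 * (1 - m) * (1 - z ^ 2) := by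
  linear_combination -m ^ 2 * hΔ + 4 * m ^ 2 * z ^ 2 * hab - 4 * z ^ 2 * hmb

lemma characteristic_root_of_eq_sub_div {K : Type*} [Field K] [NeZero (2 : K)] {a z Δ lam : K}
    (haz : a * z ≠ 0)
    (hΔ : Δ ^ 2 = z ^ 4 + 2 * (1 - 2 * a ^ 2) * z ^ 2 + 1)
    (hlam : lam = (z ^ 2 + 1 - Δ) / (2 * a * z)) :
    a * z * lam ^ 2 - (z ^ 2 + 1) * lam + a * z = 0 := by
  have discrim_eq : discrim (a * z) (-(z ^ 2 + 1)) (a * z) = Δ * Δ := by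
    rw [discrim]
    linear_combination -hΔ
  have root := (quadratic_eq_zero_iff haz discrim_eq lam).2 (.inr (by rw [hlam]; ring))
  linear_combination root

section Walk

open Finset

variable {a b s : ℝ}

lemma psi_zero_zero : psi a b s 0 0 = (1, 0) := by simp [psi]

lemma psi_zero_succ (x : ℕ) : psi a b s 0 (x + 1) = (0, 0) := by simp [psi]

lemma psi_succ_fst (t x : ℕ) :
    (psi a b s (t + 1) x).1 = a * (psi a b s t (x + 1)).1 - b * (psi a b s t (x + 1)).2 := by
  simp [psi]

lemma psi_succ_snd_zero (t : ℕ) : (psi a b s (t + 1) 0).2 = 0 := by simp [psi]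

lemma psi_succ_snd_one (t : ℕ) : (psi a b s (t + 1) 1).2 = s * (psi a b s t 0).1 := by
  simp [psi]

lemma psi_succ_snd_add_two (t x : ℕ) :
    (psi a b s (t + 1) (x + 2)).2 = b * (psi a b s t (x + 1)).1 + a * (psi a b s t (x + 1)).2 := by
  simp [psi]

lemma sq_norm_coin (a b : ℝ) (u v : ℂ) :
    ‖a * u - b * v‖ ^ 2 + ‖b * u + a * v‖ ^ 2 = (a ^ 2 + b ^ 2) * (‖u‖ ^ 2 + ‖v‖ ^ 2) := by
  simp only [← Complex.normSq_eq_norm_sq, Complex.normSq_apply, Complex.add_re, Complex.sub_re,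
    Complex.add_im, Complex.sub_im, Complex.re_ofReal_mul, Complex.im_ofReal_mul]
  ring

lemma prob_nonneg (t x : ℕ) : 0 ≤ prob a b s t x := by
  unfold prob
  positivity

lemma sum_prob_succ_le (hab : a ^ 2 + b ^ 2 ≤ 1) (hs : |s| ≤ 1) (t N : ℕ) :
    ∑ x ∈ range N, prob a b s (t + 1) x ≤ ∑ x ∈ range (N + 1), prob a b s t x := by
  have bulk (x : ℕ) : ‖(psi a b s (t + 1) x).1‖ ^ 2 + ‖(psi a b s (t + 1) (x + 2)).2‖ ^ 2
      ≤ prob a b s t (x + 1) := by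
    rw [psi_succ_fst, psi_succ_snd_add_two, sq_norm_coin]
    exact mul_le_of_le_one_left (prob_nonneg t (x + 1)) hab
  have wall : ‖(psi a b s (t + 1) 1).2‖ ^ 2 ≤ prob a b s t 0 := by
    rw [psi_succ_snd_one, norm_mul, Complex.norm_real, mul_pow, Real.norm_eq_abs]
    calc |s| ^ 2 * ‖(psi a b s t 0).1‖ ^ 2
        ≤ ‖(psi a b s t 0).1‖ ^ 2 :=
          mul_le_of_le_one_left (sq_nonneg _) (pow_le_one₀ (abs_nonneg s) hs)
      _ ≤ prob a b s t 0 := le_add_of_nonneg_right (sq_nonneg _)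
  calc ∑ x ∈ range N, prob a b s (t + 1) x
      ≤ ∑ x ∈ range N, ‖(psi a b s (t + 1) x).1‖ ^ 2
          + ∑ x ∈ range (N + 2), ‖(psi a b s (t + 1) x).2‖ ^ 2 := by
        simp only [prob, sum_add_distrib]
        gcongr
        exact Nat.le_add_right N 2
    _ = ∑ x ∈ range N, (‖(psi a b s (t + 1) x).1‖ ^ 2 + ‖(psi a b s (t + 1) (x + 2)).2‖ ^ 2)
          + ‖(psi a b s (t + 1) 1).2‖ ^ 2 := by
        rw [sum_range_succ' _ (N + 1), sum_range_succ' _ N, psi_succ_snd_zero, sum_add_distrib]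
        simp only [norm_zero]
        ring
    _ ≤ ∑ x ∈ range N, prob a b s t (x + 1) + prob a b s t 0 :=
        add_le_add (sum_le_sum fun x _ ↦ bulk x) wall
    _ = ∑ x ∈ range (N + 1), prob a b s t x := (sum_range_succ' _ N).symm

lemma sum_prob_le_one (hab : a ^ 2 + b ^ 2 ≤ 1) (hs : |s| ≤ 1) (t N : ℕ) :
    ∑ x ∈ range N, prob a b s t x ≤ 1 := by
  induction t generalizing N with
  | zero =>
    cases N with
    | zero => simp
    | succ N => simp [sum_range_succ', prob, psi_zero_zero, psi_zero_succ]
  | succ t ih => exact (sum_prob_succ_le hab hs t N).trans (ih (N + 1))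

lemma prob_le_one (hab : a ^ 2 + b ^ 2 ≤ 1) (hs : |s| ≤ 1) (t x : ℕ) : prob a b s t x ≤ 1 :=
  (single_le_sum (fun y _ ↦ prob_nonneg t y) (self_mem_range_succ x)).trans
    (sum_prob_le_one hab hs t (x + 1))

lemma norm_psi_fst_le_one (hab : a ^ 2 + b ^ 2 ≤ 1) (hs : |s| ≤ 1) (t x : ℕ) :
    ‖(psi a b s t x).1‖ ≤ 1 :=
  (sq_le_one_iff₀ (norm_nonneg _)).1 <|
    (le_add_of_nonneg_right (sq_nonneg _)).trans (prob_le_one hab hs t x)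

lemma norm_psi_snd_le_one (hab : a ^ 2 + b ^ 2 ≤ 1) (hs : |s| ≤ 1) (t x : ℕ) :
    ‖(psi a b s t x).2‖ ≤ 1 :=
  (sq_le_one_iff₀ (norm_nonneg _)).1 <|
    (le_add_of_nonneg_left (sq_nonneg _)).trans (prob_le_one hab hs t x)

end Walk

/-- Generating function in time of the left-moving amplitude at position `x`, with the junk value
`0` where the series diverges. -/
def leftGen (a b s : ℝ) (z : ℂ) (x : ℕ) : ℂ := ∑' t, (psi a b s t x).1 * z ^ t

/-- Generating function in time of the right-moving amplitude at position `x`, with the junk value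
`0` where the series diverges. -/
def rightGen (a b s : ℝ) (z : ℂ) (x : ℕ) : ℂ := ∑' t, (psi a b s t x).2 * z ^ t

section GeneratingFunctions

variable {a b s : ℝ} {z : ℂ}

lemma hasSum_leftGen (hab : a ^ 2 + b ^ 2 ≤ 1) (hs : |s| ≤ 1) (hz : ‖z‖ < 1) (x : ℕ) :
    HasSum (fun t ↦ (psi a b s t x).1 * z ^ t) (leftGen a b s z x) :=
  (summable_mul_pow_of_norm_le hz fun t ↦ norm_psi_fst_le_one hab hs t x).hasSum

lemma hasSum_rightGen (hab : a ^ 2 + b ^ 2 ≤ 1) (hs : |s| ≤ 1) (hz : ‖z‖ < 1) (x : ℕ) :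
    HasSum (fun t ↦ (psi a b s t x).2 * z ^ t) (rightGen a b s z x) :=
  (summable_mul_pow_of_norm_le hz fun t ↦ norm_psi_snd_le_one hab hs t x).hasSum

lemma norm_leftGen_le (hab : a ^ 2 + b ^ 2 ≤ 1) (hs : |s| ≤ 1) (hz : ‖z‖ < 1) (x : ℕ) :
    ‖leftGen a b s z x‖ ≤ (1 - ‖z‖)⁻¹ := by
  simpa only [one_mul, leftGen] using
    norm_tsum_mul_pow_le hz fun t ↦ norm_psi_fst_le_one hab hs t x

lemma norm_rightGen_le (hab : a ^ 2 + b ^ 2 ≤ 1) (hs : |s| ≤ 1) (hz : ‖z‖ < 1) (x : ℕ) :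
    ‖rightGen a b s z x‖ ≤ (1 - ‖z‖)⁻¹ := by
  simpa only [one_mul, rightGen] using
    norm_tsum_mul_pow_le hz fun t ↦ norm_psi_snd_le_one hab hs t x

lemma leftGen_eq (hab : a ^ 2 + b ^ 2 ≤ 1) (hs : |s| ≤ 1) (hz : ‖z‖ < 1) (x : ℕ) :
    leftGen a b s z x = (psi a b s 0 x).1
      + z * (a * leftGen a b s z (x + 1) - b * rightGen a b s z (x + 1)) := by
  rw [leftGen, tsum_mul_pow_eq_zero_add (hasSum_leftGen hab hs hz x).summable]
  congr 2
  have combined := ((hasSum_leftGen hab hs hz (x + 1)).mul_left (a : ℂ)).sub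
    ((hasSum_rightGen hab hs hz (x + 1)).mul_left (b : ℂ))
  rw [← combined.tsum_eq]
  congr 1 with t
  rw [psi_succ_fst]
  ring

lemma leftGen_zero_eq (hab : a ^ 2 + b ^ 2 ≤ 1) (hs : |s| ≤ 1) (hz : ‖z‖ < 1) :
    leftGen a b s z 0 = 1 + z * (a * leftGen a b s z 1 - b * rightGen a b s z 1) := by
  rw [leftGen_eq hab hs hz, psi_zero_zero]

lemma leftGen_succ_eq (hab : a ^ 2 + b ^ 2 ≤ 1) (hs : |s| ≤ 1) (hz : ‖z‖ < 1) (x : ℕ) :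
    leftGen a b s z (x + 1)
      = z * (a * leftGen a b s z (x + 2) - b * rightGen a b s z (x + 2)) := by
  rw [leftGen_eq hab hs hz, psi_zero_succ, zero_add]

lemma rightGen_one_eq (hab : a ^ 2 + b ^ 2 ≤ 1) (hs : |s| ≤ 1) (hz : ‖z‖ < 1) :
    rightGen a b s z 1 = z * (s * leftGen a b s z 0) := by
  rw [rightGen, tsum_mul_pow_eq_zero_add (hasSum_rightGen hab hs hz 1).summable, psi_zero_succ,
    zero_add, leftGen]
  simp only [psi_succ_snd_one, mul_assoc, tsum_mul_left]

lemma rightGen_add_two_eq (hab : a ^ 2 + b ^ 2 ≤ 1) (hs : |s| ≤ 1) (hz : ‖z‖ < 1) (x : ℕ) :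
    rightGen a b s z (x + 2)
      = z * (b * leftGen a b s z (x + 1) + a * rightGen a b s z (x + 1)) := by
  rw [rightGen, tsum_mul_pow_eq_zero_add (hasSum_rightGen hab hs hz (x + 2)).summable,
    psi_zero_succ, zero_add]
  congr 1
  have combined := ((hasSum_leftGen hab hs hz (x + 1)).mul_left (b : ℂ)).add
    ((hasSum_rightGen hab hs hz (x + 1)).mul_left (a : ℂ))
  rw [← combined.tsum_eq]
  congr 1 with t
  rw [psi_succ_snd_add_two]
  ring

variable {lam : ℂ}

lemma mul_leftGen_succ_eq_mul_rightGen_succ (ha : a ≠ 0) (hab : a ^ 2 + b ^ 2 = 1)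
    (hs : |s| ≤ 1) (hz0 : z ≠ 0) (hz : ‖z‖ < 1) (hlam1 : ‖lam‖ < 1)
    (hlam : a * z * lam ^ 2 - (z ^ 2 + 1) * lam + a * z = 0) (x : ℕ) :
    z * b * leftGen a b s z (x + 1) = (lam - a * z) * rightGen a b s z (x + 1) := by
  let growing (x : ℕ) : ℂ :=
    z * b * leftGen a b s z (x + 1) - (lam - a * z) * rightGen a b s z (x + 1)
  have growing_eq (x : ℕ) : growing x = lam • growing (x + 1) := by
    have hazC : a * z ≠ 0 := mul_ne_zero (Complex.ofReal_ne_zero.2 ha) hz0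
    have habC : (a : ℂ) ^ 2 + b ^ 2 = 1 := by exact_mod_cast hab
    apply mul_left_cancel₀ hazC
    linear_combination (z * b * lam) * leftGen_succ_eq hab.le hs hz x
      + (lam - a * z) * rightGen_add_two_eq hab.le hs hz x
      + rightGen a b s z (x + 2) * hlam - z ^ 2 * lam * rightGen a b s z (x + 2) * habC
  have growing_bounded (x : ℕ) :
      ‖growing x‖ ≤ ‖z * b‖ * (1 - ‖z‖)⁻¹ + ‖lam - a * z‖ * (1 - ‖z‖)⁻¹ := by
    refine (norm_sub_le _ _).trans ?_
    rw [norm_mul, norm_mul (lam - a * z)]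
    gcongr
    exacts [norm_leftGen_le hab.le hs hz _, norm_rightGen_le hab.le hs hz _]
  exact sub_eq_zero.1 (eq_zero_of_eq_smul_succ_of_norm_le hlam1 growing_eq growing_bounded x)

lemma rightGen_succ_eq_pow_mul (ha : a ≠ 0) (hab : a ^ 2 + b ^ 2 = 1)
    (hs : |s| ≤ 1) (hz0 : z ≠ 0) (hz : ‖z‖ < 1) (hlam1 : ‖lam‖ < 1)
    (hlam : a * z * lam ^ 2 - (z ^ 2 + 1) * lam + a * z = 0) (x : ℕ) :
    rightGen a b s z (x + 1) = lam ^ x * (z * (s * leftGen a b s z 0)) := by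
  induction x with
  | zero => rw [zero_add, pow_zero, one_mul, rightGen_one_eq hab.le hs hz]
  | succ x ih =>
    linear_combination rightGen_add_two_eq hab.le hs hz x
      + mul_leftGen_succ_eq_mul_rightGen_succ ha hab hs hz0 hz hlam1 hlam x + lam * ih

lemma mul_leftGen_succ_eq (ha : a ≠ 0) (hab : a ^ 2 + b ^ 2 = 1)
    (hs : |s| ≤ 1) (hz0 : z ≠ 0) (hz : ‖z‖ < 1) (hlam1 : ‖lam‖ < 1)
    (hlam : a * z * lam ^ 2 - (z ^ 2 + 1) * lam + a * z = 0) (x : ℕ) :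
    b * leftGen a b s z (x + 1) = s * lam ^ x * (lam - a * z) * leftGen a b s z 0 := by
  apply mul_left_cancel₀ hz0
  linear_combination mul_leftGen_succ_eq_mul_rightGen_succ ha hab hs hz0 hz hlam1 hlam x
    + (lam - a * z) * rightGen_succ_eq_pow_mul ha hab hs hz0 hz hlam1 hlam x

lemma mul_leftGen_zero_eq (ha : a ≠ 0) (hab : a ^ 2 + b ^ 2 = 1)
    (hs : |s| ≤ 1) (hz0 : z ≠ 0) (hz : ‖z‖ < 1) (hlam1 : ‖lam‖ < 1)
    (hlam : a * z * lam ^ 2 - (z ^ 2 + 1) * lam + a * z = 0) :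
    (b + s * (z ^ 2 - a * z * lam)) * leftGen a b s z 0 = b := by
  have habC : (a : ℂ) ^ 2 + b ^ 2 = 1 := by exact_mod_cast hab
  have left_one := mul_leftGen_succ_eq ha hab hs hz0 hz hlam1 hlam 0
  linear_combination b * leftGen_zero_eq hab.le hs hz + z * a * left_one
    - z * b ^ 2 * rightGen_one_eq hab.le hs hz - z ^ 2 * s * leftGen a b s z 0 * habC

lemma leftGen_zero_eq_div (ha : a ≠ 0) (hb : b ≠ 0) (hab : a ^ 2 + b ^ 2 = 1) (hs : |s| = 1)
    (hz0 : z ≠ 0) (hz : ‖z‖ < 1) {Δ m : ℂ}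
    (hΔ : Δ ^ 2 = z ^ 4 + 2 * (1 - 2 * (a : ℂ) ^ 2) * z ^ 2 + 1)
    (hlam : lam = (z ^ 2 + 1 - Δ) / (2 * a * z)) (hlam1 : ‖lam‖ < 1) (hm : m = s / b) :
    leftGen a b s z 0 = (2 - m + m * z ^ 2 - m * Δ) / (2 * (1 - m)) / (1 - z ^ 2) := by
  have haC : (a : ℂ) ≠ 0 := Complex.ofReal_ne_zero.2 ha
  have hbC : (b : ℂ) ≠ 0 := Complex.ofReal_ne_zero.2 hb
  have habC : (a : ℂ) ^ 2 + b ^ 2 = 1 := by exact_mod_cast hab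
  have hmb : m * b = s := by rw [hm, div_mul_cancel₀ _ hbC]
  have hs2 : s ^ 2 = 1 := by rw [← sq_abs, hs, one_pow]
  have hmb2 : (m * b) ^ 2 = 1 := by rw [hmb]; exact_mod_cast hs2
  have one_sub_m_ne_zero : 1 - m ≠ 0 := fun h ↦ pow_ne_zero 2 haC <| by
    linear_combination habC - hmb2 - (m + 1) * b ^ 2 * h
  have root : 2 * (a * z * lam) = z ^ 2 + 1 - Δ := by rw [hlam]; field_simp
  have origin : (2 - m + m * z ^ 2 + m * Δ) * leftGen a b s z 0 = 2 := by
    apply mul_left_cancel₀ hbC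
    linear_combination 2 * mul_leftGen_zero_eq ha hab hs.le hz0 hz hlam1
        (characteristic_root_of_eq_sub_div (mul_ne_zero haC hz0) hΔ hlam)
      + s * leftGen a b s z 0 * root
      + (z ^ 2 - 1 + Δ) * leftGen a b s z 0 * hmb
  rw [div_div, eq_div_iff (mul_ne_zero (mul_ne_zero two_ne_zero one_sub_m_ne_zero)
    (one_sub_sq_ne_zero_of_norm_lt_one hz))]
  linear_combination (2 - m + m * z ^ 2 - m * Δ) / 2 * origin
    - leftGen a b s z 0 / 2 * conjugate_denominators_mul habC hmb2 hΔ

end GeneratingFunctions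

lemma grover_coin_sq_add_sq {κ : ℝ} (hκ : 1 ≤ κ) :
    (2 * √(κ - 1) / κ) ^ 2 + ((κ - 2) / κ) ^ 2 = 1 := by
  have hκ0 : κ ≠ 0 := by positivity
  rw [div_pow, mul_pow, Real.sq_sqrt (sub_nonneg.2 hκ)]
  field_simp
  ring

/-- The condition `‖lam‖ < 1` selects the branch of the square root `Δ`. -/
theorem half_line_generating_function_left_general {a b s : ℝ} (ha : a ≠ 0) (hb : b ≠ 0)
    (hab : a ^ 2 + b ^ 2 = 1) (hs : |s| = 1) {z : ℂ} (hz0 : z ≠ 0) (hz1 : ‖z‖ < 1)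
    {x : ℕ} (hx : 1 ≤ x) {Δ lam m ν : ℂ}
    (hΔ : Δ ^ 2 = z ^ 4 + 2 * (1 - 2 * (a : ℂ) ^ 2) * z ^ 2 + 1)
    (hlam : lam = (z ^ 2 + 1 - Δ) / (2 * a * z)) (hlam1 : ‖lam‖ < 1) (hm : m = s / b)
    (hν : ν = (2 - m + m * z ^ 2 - m * Δ) / (2 * (1 - m))) :
    HasSum (fun t ↦ (psi a b s t x).1 * z ^ t)
      (m * lam ^ (x - 1) * (a * z - lam) * ν / (z ^ 2 - 1)) := by
  obtain ⟨y, rfl⟩ := Nat.exists_eq_add_of_le' hx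
  have hbC : (b : ℂ) ≠ 0 := Complex.ofReal_ne_zero.2 hb
  have quadratic :=
    characteristic_root_of_eq_sub_div (mul_ne_zero (Complex.ofReal_ne_zero.2 ha) hz0) hΔ hlam
  have away : leftGen a b s z (y + 1) = m * lam ^ y * (lam - a * z) * leftGen a b s z 0 := by
    rw [hm]
    field_simp
    rw [mul_comm]
    exact mul_leftGen_succ_eq ha hab hs.le hz0 hz1 hlam1 quadratic y
  have origin : leftGen a b s z 0 = ν / (1 - z ^ 2) :=
    hν ▸ leftGen_zero_eq_div ha hb hab hs hz0 hz1 hΔ hlam hlam1 hm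
  convert hasSum_leftGen hab.le hs.le hz1 (y + 1) using 1
  rw [away, origin, Nat.add_sub_cancel, ← neg_sub (1 : ℂ), div_neg]
  ring

/-- Generating function of the left-moving amplitude away from the wall:
for every sign `s ∈ {+1, −1}`, every `x ≥ 1` and every real `0 < z < 1`, the (absolutely
convergent) series `∑_t Ψ_t^L(x)·z^t` equals `m·λ(z)^{x−1}·(a·z − λ(z))·ν(z)/(z²−1)`. -/
theorem half_line_generating_function_left
    (κ : ℕ) (hκ : 3 ≤ κ) (s : ℝ) (hs : s = 1 ∨ s = -1) (a b : ℝ)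
    (ha : a = 2 * Real.sqrt ((κ : ℝ) - 1) / κ) (hb : b = ((κ : ℝ) - 2) / κ)
    (z : ℝ) (hz0 : 0 < z) (hz1 : z < 1) (x : ℕ) (hx : 1 ≤ x)
    (Δ lam m ν : ℝ)
    (hΔ : Δ = Real.sqrt (z ^ 4 + 2 * (1 - 2 * a ^ 2) * z ^ 2 + 1))
    (hlam : lam = (z ^ 2 + 1 - Δ) / (2 * a * z))
    (hm : m = s * κ / ((κ : ℝ) - 2))
    (hν : ν = (2 - m + m * z ^ 2 - m * Δ) / (2 * (1 - m))) :
    HasSum (fun t : ℕ => (psi a b s t x).1 * (z : ℂ) ^ t)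
      (((m * lam ^ (x - 1) * (a * z - lam) * ν / (z ^ 2 - 1) : ℝ) : ℂ)) := by
  have hκ3 : (3 : ℝ) ≤ κ := by exact_mod_cast hκ
  have hsqrt : 0 < √((κ : ℝ) - 1) := Real.sqrt_pos.2 (by linarith)
  have ha0 : 0 < a := by rw [ha]; positivity
  have hb0 : 0 < b := by rw [hb]; exact div_pos (by linarith) (by linarith)
  have hab : a ^ 2 + b ^ 2 = 1 := by rw [ha, hb]; exact grover_coin_sq_add_sq (by linarith)
  have ha1 : a ^ 2 < 1 := by linarith [pow_pos hb0 2]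
  have hΔ2 : Δ ^ 2 = z ^ 4 + 2 * (1 - 2 * a ^ 2) * z ^ 2 + 1 := by
    rw [hΔ, Real.sq_sqrt (radicand_pos ha1 z).le]
  have hlam1 : |lam| < 1 := by
    rw [hlam, hΔ]
    exact abs_characteristic_root_lt_one ha0.ne' ha1 hz0.ne'
  have hm' : m = s / b := by rw [hm, hb, div_div_eq_mul_div]
  exact_mod_cast half_line_generating_function_left_general (z := z) (Δ := Δ) (lam := lam) (m := m)
    (ν := ν) ha0.ne' hb0.ne' hab ((abs_eq zero_le_one).2 hs) (by exact_mod_cast hz0.ne')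
    (by simpa [abs_of_pos hz0] using hz1) hx (by exact_mod_cast hΔ2) (by exact_mod_cast hlam)
    (by simpa using hlam1) (by exact_mod_cast hm') (by exact_mod_cast hν)

end
end
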